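/- For every m ≥ 1 and r > 0 there exists a family of linear operators S_{t,s,r} : C^∞_0(B̄_r) → C^∞_0(B̄_r), indexed by t ≥ 1 and s > 0, such that for all j, k, l, n ∈ ℕ there are constants C = C(j,k,l,n,r) > 0 with, for all f ∈ C^∞_0(B̄_r), all s > 0 and all t ≥ 1: ⟨S_{t,s,r}(f)⟩_{n+l,k+j,r} ≤ C · s^j · t^l · ⟨f⟩_{n,k+2l,r} and ⟨(S_{t,s,r} − id)(f)⟩_{n,k+2l,r} ≤ C · ( t^{-l} · ⟨f⟩_{n+l,k,r} + s^{-j} · ⟨f⟩_{n,k+2l+j,r} ). -/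

import Mathlib

open Metric Set

/-- Membership in `C^∞₀(B̄_r)`: smooth on the closed ball and flat at the origin. -/
def FlatSmoothOnBall (m : ℕ) (r : ℝ) (f : EuclideanSpace ℝ (Fin m) → ℝ) : Prop :=
  ContDiffOn ℝ (⊤ : ℕ∞) f (closedBall 0 r) ∧
    ∀ i : ℕ, iteratedFDerivWithin ℝ i f (closedBall 0 r) 0 = 0

/-- The weighted norm `⟨f⟩_{n,k,r}` on flat functions on the closed ball. -/
noncomputable def flatNorm (m : ℕ) (r : ℝ) (n k : ℕ)
    (f : EuclideanSpace ℝ (Fin m) → ℝ) : ℝ :=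
  ⨆ p : (closedBall (0 : EuclideanSpace ℝ (Fin m)) r \ {0} :
      Set (EuclideanSpace ℝ (Fin m))) × Fin (n + 1),
    ‖(p.1 : EuclideanSpace ℝ (Fin m))‖ ^ (-(k : ℤ)) *
      ‖iteratedFDerivWithin ℝ p.2 f (closedBall 0 r) p.1‖

/-!
After rescaling, look at the annulus `‖x‖ ≈ ε`. There `f` is averaged over the contractions
`x ↦ (1 - θ) • x + θ • p` towards the points `p` of the ball of radius `r / 2`, weighted by a bump
function; contractions, unlike translations, never leave the ball. Averages at the scales
`θ = 2 ^ k * ε ^ 2 / t ≤ ε` are combined with coefficients `a k` of total sum `1` whose moments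
`∑ a k * 2 ^ (k * q)`, `q ≥ 1`, all vanish, so that the Taylor terms of every order cancel. A
derivative moved to the kernel costs `t / ε ^ 2 ≈ t / ‖x‖ ^ 2`, and the error of order `l` is
`(ε ^ 2 / t) ^ l`: the two estimates, for every `l` at once.

The annuli `ε = 2 ^ (-i)` are glued by a dyadic partition of unity. Keeping only those with
`2 ^ i < s` confines the operator to `‖x‖ ≳ 1 / s`, where a power `‖x‖ ^ (-j)` costs `s ^ j`, and
makes an error confined to `‖x‖ ≲ 1 / s`, where a spare power `‖x‖ ^ j` gains `s ^ (-j)`. Since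
derivatives of flat functions are controlled by higher ones through integration from the origin,
the weighted norms bound all lower derivatives with the corresponding extra powers of `‖x‖`.
-/

open Filter MeasureTheory Topology
open scoped ContDiff Convolution

section MomentSequence

variable {b : ℝ} {F : Type*} [NormedAddCommGroup F] [NormedSpace ℝ F]

/-- A sequence `a` whose moments against the powers of the nodes `b ^ k` are those of a unit mass
at the origin: `∑ a k = 1`, and `∑ a k * (b ^ k) ^ q = 0` for all `q ≥ 1`, absolutely convergent. -/
structure IsMomentSequence (b : ℝ) (a : ℕ → ℝ) : Prop where
  summable_abs (q : ℕ) : Summable fun k ↦ |a k| * (b ^ k) ^ q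
  hasSum (q : ℕ) : HasSum (fun k ↦ a k * (b ^ k) ^ q) (if q = 0 then 1 else 0)

/-- The Taylor coefficients of the entire function `F` determined, for `1 < b`, by `F 0 = 1` and
`F (b * z) = (1 - z) * F z`, which vanishes at `b, b ^ 2, …`. -/
noncomputable def eulerCoeff (b : ℝ) : ℕ → ℝ
  | 0 => 1
  | k + 1 => -eulerCoeff b k / (b ^ (k + 1) - 1)

/-- The entire function with Taylor coefficients `eulerCoeff b`; divided by its value at `1`, these
coefficients form a moment sequence. -/
noncomputable def eulerSeries (b z : ℝ) : ℝ := ∑' k, eulerCoeff b k * z ^ k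

lemma pow_succ_sub_one_pos (hb : 1 < b) (k : ℕ) : 0 < b ^ (k + 1) - 1 :=
  sub_pos.2 (one_lt_pow₀ hb k.succ_ne_zero)

lemma eulerCoeff_ne_zero (hb : 1 < b) : ∀ k, eulerCoeff b k ≠ 0
  | 0 => one_ne_zero
  | k + 1 => div_ne_zero (neg_ne_zero.2 (eulerCoeff_ne_zero hb k)) (pow_succ_sub_one_pos hb k).ne'

lemma summable_norm_eulerCoeff_mul_pow (hb : 1 < b) (z : ℝ) :
    Summable fun k ↦ ‖eulerCoeff b k * z ^ k‖ := by
  obtain rfl | hz := eq_or_ne z 0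
  · exact summable_of_ne_finset_zero (s := {0}) fun k hk ↦ by simp_all
  have ratio_tendsto : Tendsto (fun k ↦ |z| * (b ^ (k + 1) - 1)⁻¹) atTop (𝓝 0) := by
    simpa [sub_eq_add_neg] using (tendsto_atTop_add_const_right atTop (-1) <|
      (tendsto_pow_atTop_atTop_of_one_lt hb).comp (tendsto_add_atTop_nat 1)).inv_tendsto_atTop
        |>.const_mul |z|
  refine (summable_of_ratio_test_tendsto_lt_one zero_lt_one
    (.of_forall fun k ↦ mul_ne_zero (eulerCoeff_ne_zero hb k) (pow_ne_zero k hz))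
    (ratio_tendsto.congr fun k ↦ ?_)).norm
  have hk := abs_ne_zero.2 (eulerCoeff_ne_zero hb k)
  have hz := abs_ne_zero.2 hz
  simp only [eulerCoeff, norm_mul, norm_div, norm_neg, norm_pow, Real.norm_eq_abs,
    abs_of_pos (pow_succ_sub_one_pos hb k), pow_succ |z|]
  field_simp

lemma eulerSeries_zero (b : ℝ) : eulerSeries b 0 = 1 := by
  rw [eulerSeries, tsum_eq_single 0 fun k hk ↦ by simp [hk]]
  simp [eulerCoeff]

lemma eulerSeries_eq_one_add (hb : 1 < b) (z : ℝ) :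
    eulerSeries b z = 1 + ∑' k, eulerCoeff b (k + 1) * z ^ (k + 1) := by
  rw [eulerSeries, (summable_norm_eulerCoeff_mul_pow hb z).of_norm.tsum_eq_zero_add]
  simp [eulerCoeff]

lemma eulerSeries_mul (hb : 1 < b) (z : ℝ) :
    eulerSeries b (b * z) = (1 - z) * eulerSeries b z := by
  have hs := (summable_norm_eulerCoeff_mul_pow hb z).of_norm
  have key : ∑' k, eulerCoeff b (k + 1) * (b * z) ^ (k + 1) =
      ∑' k, eulerCoeff b (k + 1) * z ^ (k + 1) - z * eulerSeries b z := by
    rw [eulerSeries, ← tsum_mul_left, ← ((summable_nat_add_iff 1).2 hs).tsum_sub (hs.mul_left z)]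
    congr 1 with k
    have := (pow_succ_sub_one_pos hb k).ne'
    rw [mul_pow, eulerCoeff]
    field_simp
    ring
  rw [eulerSeries_eq_one_add hb, key]
  linear_combination -eulerSeries_eq_one_add hb z

lemma eulerSeries_pow_succ (hb : 1 < b) (q : ℕ) : eulerSeries b (b ^ (q + 1)) = 0 := by
  induction q with
  | zero => simpa using eulerSeries_mul hb 1
  | succ q ih => rw [pow_succ', eulerSeries_mul hb, ih, mul_zero]

lemma tendsto_eulerSeries_inv_pow (hb : 1 < b) :
    Tendsto (fun n ↦ eulerSeries b (b⁻¹ ^ n)) atTop (𝓝 1) := by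
  rw [← eulerSeries_zero b]
  have hinv : 0 ≤ b⁻¹ := by positivity
  refine tendsto_tsum_of_dominated_convergence (summable_norm_eulerCoeff_mul_pow hb 1)
    (fun k ↦ ((tendsto_pow_atTop_nhds_zero_of_lt_one hinv (inv_lt_one_of_one_lt₀ hb)).pow k
      |>.const_mul _)) (.of_forall fun n k ↦ ?_)
  rw [norm_mul, norm_mul, one_pow, norm_one, norm_pow, norm_pow, Real.norm_of_nonneg hinv]
  gcongr
  exact pow_le_one₀ (by positivity) (pow_le_one₀ hinv (inv_le_one_of_one_le₀ hb.le))

lemma eulerSeries_one_ne_zero (hb : 1 < b) : eulerSeries b 1 ≠ 0 := by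
  intro h
  have vanish (n : ℕ) : eulerSeries b (b⁻¹ ^ n) = 0 := by
    induction n with
    | zero => simpa using h
    | succ n ih =>
      have hne : 1 - b⁻¹ ^ (n + 1) ≠ 0 := (sub_pos.2 <|
        pow_lt_one₀ (by positivity) (inv_lt_one_of_one_lt₀ hb) n.succ_ne_zero).ne'
      have := eulerSeries_mul hb (b⁻¹ ^ (n + 1))
      rw [pow_succ', mul_inv_cancel_left₀ (by positivity), ih] at this
      rw [pow_succ'] at hne ⊢
      exact (mul_eq_zero.1 this.symm).resolve_left hne
  exact zero_ne_one <| tendsto_nhds_unique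
    (tendsto_const_nhds.congr fun n ↦ (vanish n).symm) (tendsto_eulerSeries_inv_pow hb)

theorem exists_isMomentSequence (hb : 1 < b) : ∃ a, IsMomentSequence b a := by
  have hpow (q k : ℕ) : (b ^ q) ^ k = (b ^ k) ^ q := pow_right_comm b q k
  have hs (q : ℕ) : Summable fun k ↦ ‖eulerCoeff b k * (b ^ k) ^ q‖ := by
    simpa only [hpow q] using summable_norm_eulerCoeff_mul_pow hb (b ^ q)
  refine ⟨fun k ↦ eulerCoeff b k / eulerSeries b 1, fun q ↦ ?_, fun q ↦ ?_⟩
  · refine ((hs q).div_const |eulerSeries b 1|).congr fun k ↦ ?_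
    rw [norm_mul, Real.norm_eq_abs, Real.norm_of_nonneg (by positivity), abs_div]
    ring
  · have hsum : ∑' k, eulerCoeff b k * (b ^ k) ^ q = eulerSeries b (b ^ q) := by
      simp only [eulerSeries, hpow q]
    have value : eulerSeries b (b ^ q) / eulerSeries b 1 = if q = 0 then 1 else 0 := by
      rcases q with _ | q
      · simp [eulerSeries_one_ne_zero hb]
      · simp [eulerSeries_pow_succ hb]
    simpa only [hsum, value, div_mul_eq_mul_div] using
      (hs q).of_norm.hasSum.div_const (eulerSeries b 1)

/-- The absolute moment `∑ |a k| * (b ^ k) ^ q`. -/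
noncomputable def absMoment (b : ℝ) (a : ℕ → ℝ) (q : ℕ) : ℝ := ∑' k, |a k| * (b ^ k) ^ q

lemma absMoment_nonneg {b : ℝ} (hb : 0 ≤ b) (a : ℕ → ℝ) (q : ℕ) : 0 ≤ absMoment b a q :=
  tsum_nonneg fun _ ↦ by positivity

namespace IsMomentSequence

variable {a : ℕ → ℝ}

lemma sum_le_absMoment (ha : IsMomentSequence b a) (hb : 1 < b) (K : Finset ℕ) (q : ℕ) :
    ∑ k ∈ K, |a k| * (b ^ k) ^ q ≤ absMoment b a q :=
  (ha.summable_abs q).sum_le_tsum K fun k _ ↦ by positivity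

lemma hasSum_eval (ha : IsMomentSequence b a) (P : Polynomial ℝ) :
    HasSum (fun k ↦ a k * P.eval (b ^ k)) (P.eval 0) := by
  induction P using Polynomial.induction_on' with
  | add p q hp hq => simpa only [Polynomial.eval_add, mul_add] using hp.add hq
  | monomial q c =>
    simpa only [Polynomial.eval_monomial, zero_pow_eq, mul_left_comm c] using
      (ha.hasSum q).mul_left c

lemma hasSum_smul_taylorWithinEval (ha : IsMomentSequence b a) (P : Polynomial ℝ) (H : ℝ → F)
    (l : ℕ) (s : Set ℝ) (θ : ℝ) :
    HasSum (fun k ↦ (a k * P.eval (b ^ k)) • taylorWithinEval H l s 0 (b ^ k * θ))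
      (P.eval 0 • H 0) := by
  induction l with
  | zero => simpa only [taylor_within_zero_eval] using (ha.hasSum_eval P).smul_const (H 0)
  | succ l ih =>
    have next := (ha.hasSum_eval (P * Polynomial.X ^ (l + 1))).mul_right
      ((((l : ℝ) + 1) * l.factorial)⁻¹ * θ ^ (l + 1))
      |>.smul_const (iteratedDerivWithin (l + 1) H s 0)
    convert ih.add next using 1
    · ext k
      rw [taylorWithinEval_succ, smul_add, smul_smul, sub_zero, mul_pow]
      simp only [Polynomial.eval_mul, Polynomial.eval_pow, Polynomial.eval_X]
      congr 2
      ring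
    · simp

end IsMomentSequence

lemma norm_sub_taylorWithinEval_le_two_mul {H : ℝ → F} {δ M u : ℝ} {l : ℕ} (hδ : 0 < δ)
    (hH : ContDiffOn ℝ l H (Icc 0 δ))
    (hM : ∀ v ∈ Icc 0 δ, ‖iteratedDerivWithin l H (Icc 0 δ) v‖ ≤ M) (hu : u ∈ Icc 0 δ) :
    ‖H u - taylorWithinEval H l (Icc 0 δ) 0 u‖ ≤ 2 * M * u ^ l := by
  have h0 : (0 : ℝ) ∈ Icc 0 δ := ⟨le_rfl, hδ.le⟩
  have hM0 : 0 ≤ M := (norm_nonneg _).trans (hM 0 h0)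
  rcases l with _ | l
  · simp only [iteratedDerivWithin_zero] at hM
    rw [taylor_within_zero_eval, pow_zero, mul_one, two_mul]
    exact (norm_sub_le _ _).trans (add_le_add (hM u hu) (hM 0 h0))
  have remainder := taylor_mean_remainder_bound hδ.le (by exact_mod_cast hH) hu hM
  have hfac : (1 : ℝ) ≤ l.factorial := by exact_mod_cast l.factorial_pos
  have hfac' : (1 : ℝ) ≤ (l + 1) * l.factorial := by nlinarith
  have hu0 : 0 ≤ u ^ (l + 1) := pow_nonneg hu.1 _
  rw [sub_zero] at remainder
  rw [taylorWithinEval_succ, sub_zero, ← sub_sub]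
  calc _ ≤ M * u ^ (l + 1) / l.factorial + 1 * u ^ (l + 1) * M := by
        refine (norm_sub_le _ _).trans (add_le_add remainder ?_)
        rw [norm_smul, norm_mul, norm_inv, Real.norm_of_nonneg hu0,
          Real.norm_of_nonneg (by positivity)]
        gcongr
        exacts [inv_le_one_of_one_le₀ hfac', hM 0 h0]
    _ ≤ M * u ^ (l + 1) + 1 * u ^ (l + 1) * M := by
        gcongr
        exact div_le_self (by positivity) hfac
    _ = 2 * M * u ^ (l + 1) := by ring

lemma norm_taylorWithinEval_zero_le {H : ℝ → F} {s : Set ℝ} {δ M u : ℝ} {l : ℕ} (hδ : 0 ≤ δ)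
    (hM : ∀ q ≤ l, ‖iteratedDerivWithin q H s 0‖ ≤ δ ^ (l - q) * M) (hu : δ ≤ u) :
    ‖taylorWithinEval H l s 0 u‖ ≤ (l + 1) * M * u ^ l := by
  have hM0 : 0 ≤ M := (norm_nonneg _).trans ((hM l le_rfl).trans_eq (by simp))
  have hu0 : 0 ≤ u := hδ.trans hu
  have term (q : ℕ) (hq : q ∈ Finset.range (l + 1)) :
      ‖((q.factorial : ℝ)⁻¹ * (u - 0) ^ q) • iteratedDerivWithin q H s 0‖ ≤ M * u ^ l := by
    have hql : q ≤ l := Finset.mem_range_succ_iff.1 hq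
    have hfac : (1 : ℝ) ≤ q.factorial := by exact_mod_cast q.factorial_pos
    rw [norm_smul, norm_mul, norm_inv, sub_zero, Real.norm_of_nonneg (by positivity),
      Real.norm_of_nonneg (by positivity)]
    calc _ ≤ 1 * u ^ q * (u ^ (l - q) * M) := by
          gcongr
          exacts [inv_le_one_of_one_le₀ hfac, (hM q hql).trans (by gcongr)]
      _ = M * u ^ l := by rw [← pow_mul_pow_sub u hql]; ring
  rw [taylor_within_apply]
  refine (norm_sum_le_of_le _ term).trans_eq ?_
  rw [Finset.sum_const, Finset.card_range, nsmul_eq_mul]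
  push_cast
  ring

lemma norm_indicator_Iic_sub_taylorWithinEval_le {H : ℝ → F} {δ M u : ℝ} {l : ℕ} (hδ : 0 < δ)
    (hH : ContDiffOn ℝ l H (Icc 0 δ))
    (hM : ∀ v ∈ Icc 0 δ, ‖iteratedDerivWithin l H (Icc 0 δ) v‖ ≤ M)
    (hM0 : ∀ q ≤ l, ‖iteratedDerivWithin q H (Icc 0 δ) 0‖ ≤ δ ^ (l - q) * M) (hu : 0 ≤ u) :
    ‖(Iic δ).indicator H u - taylorWithinEval H l (Icc 0 δ) 0 u‖ ≤ (l + 2) * M * u ^ l := by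
  have hM' : 0 ≤ M := (norm_nonneg _).trans (hM 0 ⟨le_rfl, hδ.le⟩)
  by_cases huδ : u ≤ δ
  · rw [indicator_of_mem (mem_Iic.2 huδ)]
    refine (norm_sub_taylorWithinEval_le_two_mul hδ hH hM ⟨hu, huδ⟩).trans ?_
    gcongr
    exact le_add_of_nonneg_left l.cast_nonneg
  · rw [indicator_of_notMem (mt mem_Iic.1 huδ), zero_sub, norm_neg]
    refine (norm_taylorWithinEval_zero_le hδ.le hM0 (not_le.1 huδ).le).trans ?_
    gcongr
    exact one_le_two

/- The full series reproduces `H 0` on the Taylor polynomial of `H`; it remains to compare each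
term with that polynomial, by Taylor's theorem at the scales in `K` and trivially at the others. -/
theorem IsMomentSequence.norm_sum_smul_sub_le {a : ℕ → ℝ} (ha : IsMomentSequence b a) (hb : 1 < b)
    {H : ℝ → F} {δ M θ : ℝ} (l i : ℕ) (hδ : 0 < δ) (hθ : 0 < θ) (hθ1 : θ ≤ 1)
    (hH : ContDiffOn ℝ l H (Icc 0 δ))
    (hM : ∀ v ∈ Icc 0 δ, ‖iteratedDerivWithin l H (Icc 0 δ) v‖ ≤ M)
    (hM0 : ∀ q ≤ l, ‖iteratedDerivWithin q H (Icc 0 δ) 0‖ ≤ δ ^ (l - q) * M)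
    {K : Finset ℕ} (hK : ∀ k, k ∈ K ↔ b ^ k * θ ≤ δ) :
    ‖∑ k ∈ K, (a k * (1 - b ^ k * θ) ^ i) • H (b ^ k * θ) - H 0‖ ≤
      (l + 2) * absMoment b a (i + l) * θ ^ l * M := by
  let T (k : ℕ) : F := taylorWithinEval H l (Icc 0 δ) 0 (b ^ k * θ)
  let G (k : ℕ) : F := (Iic δ).indicator H (b ^ k * θ)
  have sum_T : HasSum (fun k ↦ (a k * (1 - b ^ k * θ) ^ i) • T k) (H 0) := by
    obtain ⟨P, hP⟩ : ∃ P : Polynomial ℝ, ∀ x, P.eval x = (1 - x * θ) ^ i :=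
      ⟨(1 - Polynomial.C θ * Polynomial.X) ^ i, fun x ↦ by simp [Polynomial.eval_pow, mul_comm x]⟩
    simpa only [hP, zero_mul, sub_zero, one_pow, one_smul] using
      ha.hasSum_smul_taylorWithinEval P H l (Icc 0 δ) θ
  have sum_G : HasSum (fun k ↦ (a k * (1 - b ^ k * θ) ^ i) • G k)
      (∑ k ∈ K, (a k * (1 - b ^ k * θ) ^ i) • H (b ^ k * θ)) := by
    have : ∑ k ∈ K, (a k * (1 - b ^ k * θ) ^ i) • H (b ^ k * θ) =
        ∑ k ∈ K, (a k * (1 - b ^ k * θ) ^ i) • G k :=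
      Finset.sum_congr rfl fun k hk ↦ by simp only [G, indicator_of_mem (mem_Iic.2 ((hK k).1 hk))]
    rw [this]
    exact hasSum_sum_of_ne_finset_zero fun k hk ↦ by
      simp only [G, indicator_of_notMem (mt (hK k).2 hk : b ^ k * θ ∉ Iic δ), smul_zero]
  have weight (k : ℕ) : |1 - b ^ k * θ| ≤ b ^ k := by
    have : 1 ≤ b ^ k := one_le_pow₀ hb.le
    rw [abs_le]
    constructor <;> nlinarith
  rw [← (sum_G.sub sum_T).tsum_eq]
  refine (tsum_of_norm_bounded ((ha.summable_abs (i + l)).hasSum.mul_left ((l + 2) * M * θ ^ l))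
    fun k ↦ ?_).trans_eq (by rw [absMoment]; ring)
  rw [← smul_sub, norm_smul, norm_mul, norm_pow, Real.norm_eq_abs, Real.norm_eq_abs]
  calc _ ≤ |a k| * (b ^ k) ^ i * ((l + 2) * M * (b ^ k * θ) ^ l) := by
        gcongr
        exacts [weight k, norm_indicator_Iic_sub_taylorWithinEval_le hδ hH hM hM0 (by positivity)]
    _ = _ := by ring

end MomentSequence

section IteratedFDeriv

variable {E F : Type*} [NormedAddCommGroup E] [NormedSpace ℝ E]
  [NormedAddCommGroup F] [NormedSpace ℝ F]

lemma norm_iteratedFDeriv_iteratedFDeriv (u : E → F) (x : E) (n i : ℕ) :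
    ‖iteratedFDeriv ℝ i (iteratedFDeriv ℝ n u) x‖ = ‖iteratedFDeriv ℝ (n + i) u x‖ := by
  induction n generalizing i with
  | zero =>
    rw [iteratedFDeriv_zero_eq_comp, LinearIsometryEquiv.norm_iteratedFDeriv_comp_left, zero_add]
  | succ n ih =>
    rw [iteratedFDeriv_succ_eq_comp_left]
    have := LinearIsometryEquiv.norm_iteratedFDeriv_comp_left (𝕜 := ℝ) (G := E [×(n + 1)]→L[ℝ] F)
      (continuousMultilinearCurryLeftEquiv ℝ (fun _ : Fin (n + 1) ↦ E) F).symm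
      (fderiv ℝ (iteratedFDeriv ℝ n u)) x i
    refine this.trans ?_
    rw [norm_iteratedFDeriv_fderiv, ih, Nat.succ_add_eq_add_succ]

end IteratedFDeriv

section Convolution

open ContinuousLinearMap

variable {E F : Type*} [NormedAddCommGroup E] [NormedSpace ℝ E] [FiniteDimensional ℝ E]
  [MeasurableSpace E] [BorelSpace E] {μ : Measure E} [μ.IsAddHaarMeasure]
  [NormedAddCommGroup F] [NormedSpace ℝ F] {ψ : E → ℝ} {g : E → F}

lemma iteratedFDeriv_convolution_right (hψ : LocallyIntegrable ψ μ) (hg : ContDiff ℝ ∞ g)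
    (hgc : HasCompactSupport g) (n : ℕ) :
    iteratedFDeriv ℝ n (ψ ⋆[lsmul ℝ ℝ, μ] g) = ψ ⋆[lsmul ℝ ℝ, μ] iteratedFDeriv ℝ n g := by
  induction n with
  | zero =>
    ext1 x
    exact ((continuousMultilinearCurryFin0 ℝ E F).symm.toContinuousLinearEquiv.integral_comp_comm
      fun t ↦ ψ t • g (x - t)).symm
  | succ n ih =>
    ext1 x
    have deriv := (hgc.iteratedFDeriv n).hasFDerivAt_convolution_right (lsmul ℝ ℝ) hψ
      (hg.iteratedFDeriv_right (i := n) (m := 1) (by exact_mod_cast le_top)) x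
    rw [iteratedFDeriv_succ_eq_comp_left, Function.comp_apply, ih, deriv.fderiv]
    exact (ContinuousLinearEquiv.integral_comp_comm (𝕜 := ℝ) (F := E [×(n + 1)]→L[ℝ] F)
      (continuousMultilinearCurryLeftEquiv ℝ (fun _ : Fin (n + 1) ↦ E) F).symm
      fun t ↦ ψ t • fderiv ℝ (iteratedFDeriv ℝ n g) (x - t)).symm

lemma iteratedFDeriv_convolution_left_apply (hψ : ContDiff ℝ ∞ ψ)
    (hψc : HasCompactSupport ψ) (hg : LocallyIntegrable g μ) (n : ℕ) (x : E) (v : Fin n → E) :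
    iteratedFDeriv ℝ n (ψ ⋆[lsmul ℝ ℝ, μ] g) x v =
      ((fun t ↦ iteratedFDeriv ℝ n ψ t v) ⋆[lsmul ℝ ℝ, μ] g) x := by
  induction n generalizing x with
  | zero => simp
  | succ n ih =>
    let φ (t : E) : ℝ := iteratedFDeriv ℝ n ψ t (Fin.tail v)
    have hψn : ContDiff ℝ ∞ (iteratedFDeriv ℝ n ψ) :=
      hψ.iteratedFDeriv_right (by exact_mod_cast le_top)
    have hφ : ContDiff ℝ ∞ φ :=
      (ContinuousMultilinearMap.apply ℝ _ ℝ (Fin.tail v)).contDiff.comp hψn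
    have hφc : HasCompactSupport φ :=
      (hψc.iteratedFDeriv (𝕜 := ℝ) n).comp_left
        (g := fun A : E [×n]→L[ℝ] ℝ ↦ A (Fin.tail v)) (zero_apply _)
    have hdiff : Differentiable ℝ (iteratedFDeriv ℝ n (ψ ⋆[lsmul ℝ ℝ, μ] g)) :=
      (hψc.contDiff_convolution_left (lsmul ℝ ℝ) hψ hg).differentiable_iteratedFDeriv
        (by exact_mod_cast ENat.natCast_lt_top n)
    have deriv := hφc.hasFDerivAt_convolution_left (lsmul ℝ ℝ) (hφ.of_le (by simp)) hg x
    have exists_conv := (hφc.fderiv ℝ).convolutionExists_left ((lsmul ℝ ℝ).precompL E)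
      (hφ.continuous_fderiv (by simp)) hg x
    rw [iteratedFDeriv_succ_apply_left, ← fderiv_continuousMultilinear_apply_const_apply (hdiff x),
      funext (ih · (Fin.tail v)), deriv.fderiv, convolution_def, integral_apply exists_conv]
    refine integral_congr_ae (.of_forall fun t ↦ ?_)
    change fderiv ℝ φ t (v 0) • g (x - t) = iteratedFDeriv ℝ (n + 1) ψ t v • g (x - t)
    rw [iteratedFDeriv_succ_apply_left, ← fderiv_continuousMultilinear_apply_const_apply
      (hψn.differentiable (by simp) t)]

end Convolution

section ContractionAverage

open ContinuousLinearMap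

variable {E F : Type*} [NormedAddCommGroup E] [NormedSpace ℝ E] [MeasurableSpace E]
  [NormedAddCommGroup F] [NormedSpace ℝ F] {μ : Measure E} {ψ : E → ℝ} {θ : ℝ} {h : E → F}

/-- The average of `h` over the contractions of ratio `1 - θ` towards the points `p`, weighted
by `ψ p`. -/
noncomputable def contractionAverage (μ : Measure E) (ψ : E → ℝ) (θ : ℝ) (h : E → F) (x : E) : F :=
  ∫ p, ψ p • h (AffineMap.lineMap x p θ) ∂μ

lemma contractionAverage_eq_convolution (hθ : θ ≠ 0) :
    contractionAverage μ ψ θ h =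
      fun x ↦ (ψ ⋆[lsmul ℝ ℝ, μ] fun q ↦ h (-θ • q)) (-(θ⁻¹ * (1 - θ)) • x) := by
  ext x
  simp only [contractionAverage, convolution_def, lsmul_apply]
  congr! 4 with p
  rw [AffineMap.lineMap_apply_module, smul_sub, smul_smul, neg_mul_neg, mul_inv_cancel_left₀ hθ,
    neg_smul θ, sub_neg_eq_add]

variable [BorelSpace E]

lemma integrable_smul_comp_lineMap [IsLocallyFiniteMeasure μ] (hψ : Continuous ψ)
    (hψc : HasCompactSupport ψ) (hh : Continuous h) (x : E) (θ : ℝ) :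
    Integrable (fun p ↦ ψ p • h (AffineMap.lineMap x p θ)) μ := by
  refine (Continuous.smul hψ (hh.comp ?_)).integrable_of_hasCompactSupport hψc.smul_right
  simp only [AffineMap.lineMap_apply_module]
  fun_prop

variable [FiniteDimensional ℝ E] [μ.IsAddHaarMeasure]

lemma contDiff_contractionAverage (hψ : ContDiff ℝ ∞ ψ)
    (hψc : HasCompactSupport ψ) (hh : Continuous h) (hθ : θ ≠ 0) :
    ContDiff ℝ ∞ (contractionAverage μ ψ θ h) := by
  rw [contractionAverage_eq_convolution hθ]
  exact (hψc.contDiff_convolution_left (lsmul ℝ ℝ) hψ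
    (hh.comp (continuous_const_smul _)).locallyIntegrable).comp (contDiff_const_smul _)

lemma iteratedFDeriv_contractionAverage (hψ : Continuous ψ)
    (hh : ContDiff ℝ ∞ h) (hhc : HasCompactSupport h) (hθ : θ ≠ 0) (n : ℕ) :
    iteratedFDeriv ℝ n (contractionAverage μ ψ θ h) =
      fun x ↦ (1 - θ) ^ n • contractionAverage μ ψ θ (iteratedFDeriv ℝ n h) x := by
  have hh' : ContDiff ℝ ∞ fun q ↦ h (-θ • q) := hh.comp (contDiff_const_smul _)
  have hhc' : HasCompactSupport fun q ↦ h (-θ • q) := hhc.comp_smul (neg_ne_zero.2 hθ)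
  have deriv_scaled : (ψ ⋆[lsmul ℝ ℝ, μ] iteratedFDeriv ℝ n fun q ↦ h (-θ • q)) =
      (-θ) ^ n • (ψ ⋆[lsmul ℝ ℝ, μ] fun q ↦ iteratedFDeriv ℝ n h (-θ • q)) := by
    rw [iteratedFDeriv_comp_const_smul (-θ) (hh.of_le (by exact_mod_cast le_top)),
      ← convolution_smul]
    rfl
  have smooth := hhc'.contDiff_convolution_right (lsmul ℝ ℝ) hψ.locallyIntegrable hh' (μ := μ)
  rw [contractionAverage_eq_convolution hθ, contractionAverage_eq_convolution hθ,
    iteratedFDeriv_comp_const_smul _ (smooth.of_le (by exact_mod_cast le_top)),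
    iteratedFDeriv_convolution_right hψ.locallyIntegrable hh' hhc', deriv_scaled]
  ext1 x
  rw [Pi.smul_apply, smul_smul, ← mul_pow, neg_mul_neg, mul_right_comm, inv_mul_cancel₀ hθ, one_mul]

lemma iteratedFDeriv_contractionAverage_apply (hψ : ContDiff ℝ ∞ ψ)
    (hψc : HasCompactSupport ψ) (hh : Continuous h) (hθ : θ ≠ 0) (n : ℕ) (x : E) (v : Fin n → E) :
    iteratedFDeriv ℝ n (contractionAverage μ ψ θ h) x v =
      (-(θ⁻¹ * (1 - θ))) ^ n • contractionAverage μ (fun p ↦ iteratedFDeriv ℝ n ψ p v) θ h x := by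
  have loc_int : LocallyIntegrable (fun q ↦ h (-θ • q)) μ :=
    (hh.comp (continuous_const_smul _)).locallyIntegrable
  have smooth := hψc.contDiff_convolution_left (lsmul ℝ ℝ) hψ loc_int
  rw [contractionAverage_eq_convolution hθ, contractionAverage_eq_convolution hθ,
    iteratedFDeriv_comp_const_smul _ (smooth.of_le (by exact_mod_cast le_top)),
    _root_.smul_apply, iteratedFDeriv_convolution_left_apply hψ hψc loc_int]

lemma norm_iteratedFDeriv_contractionAverage_le_of_norm_le (hψ : ContDiff ℝ ∞ ψ)
    (hψc : HasCompactSupport ψ) (hh : Continuous h) (hθ : θ ∈ Ioc 0 1) {B : ℝ}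
    (hB0 : 0 ≤ B) (n : ℕ) {x : E} (hB : ∀ p ∈ tsupport ψ, ‖h (AffineMap.lineMap x p θ)‖ ≤ B) :
    ‖iteratedFDeriv ℝ n (contractionAverage μ ψ θ h) x‖ ≤
      θ⁻¹ ^ n * (∫ p, ‖iteratedFDeriv ℝ n ψ p‖ ∂μ) * B := by
  obtain ⟨hθ0, hθ1⟩ := hθ
  have bound_const : ‖(-(θ⁻¹ * (1 - θ))) ^ n‖ ≤ θ⁻¹ ^ n := by
    rw [norm_pow, norm_neg, norm_mul, norm_inv, Real.norm_of_nonneg hθ0.le,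
      Real.norm_of_nonneg (sub_nonneg.2 hθ1)]
    gcongr
    exact mul_le_of_le_one_right (by positivity) (by linarith)
  have hint : Integrable (fun p ↦ ‖iteratedFDeriv ℝ n ψ p‖ * B) μ :=
    ((hψ.continuous_iteratedFDeriv (by exact_mod_cast le_top)).norm.integrable_of_hasCompactSupport
      (hψc.iteratedFDeriv n).norm).mul_const B
  have bound_integrand (v : Fin n → E) (p : E) :
      ‖iteratedFDeriv ℝ n ψ p v • h (AffineMap.lineMap x p θ)‖ ≤
        ‖iteratedFDeriv ℝ n ψ p‖ * B * ∏ i, ‖v i‖ := by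
    by_cases hp : p ∈ tsupport ψ
    · rw [norm_smul, mul_right_comm]
      gcongr
      exacts [ContinuousMultilinearMap.le_opNorm _ v, hB p hp]
    · simp [Function.notMem_support.1 (mt (support_iteratedFDeriv_subset n ·) hp)]
  refine ContinuousMultilinearMap.opNorm_le_bound (by positivity) fun v ↦ ?_
  rw [iteratedFDeriv_contractionAverage_apply hψ hψc hh hθ0.ne', norm_smul, mul_assoc, mul_assoc]
  gcongr
  refine (norm_integral_le_of_norm_le (hint.mul_const _) (.of_forall (bound_integrand v))).trans ?_
  rw [integral_mul_const, integral_mul_const, mul_assoc]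

lemma norm_iteratedFDeriv_contractionAverage_le (hψ : ContDiff ℝ ∞ ψ)
    (hψc : HasCompactSupport ψ) (hh : ContDiff ℝ ∞ h) (hhc : HasCompactSupport h)
    (hθ : θ ∈ Ioc 0 1) {B : ℝ} (hB0 : 0 ≤ B) (e e' : ℕ) {x : E}
    (hB : ∀ p ∈ tsupport ψ, ‖iteratedFDeriv ℝ e h (AffineMap.lineMap x p θ)‖ ≤ B) :
    ‖iteratedFDeriv ℝ (e + e') (contractionAverage μ ψ θ h) x‖ ≤
      θ⁻¹ ^ e' * (∫ p, ‖iteratedFDeriv ℝ e' ψ p‖ ∂μ) * B := by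
  have h1θ : ‖(1 - θ) ^ e‖ ≤ 1 := by
    rw [norm_pow, Real.norm_of_nonneg (sub_nonneg.2 hθ.2)]
    exact pow_le_one₀ (sub_nonneg.2 hθ.2) (by linarith [hθ.1])
  have hhe : Continuous (iteratedFDeriv ℝ e h) :=
    hh.continuous_iteratedFDeriv (by exact_mod_cast le_top)
  have smooth : ContDiff ℝ ∞ (contractionAverage μ ψ θ (iteratedFDeriv ℝ e h)) :=
    contDiff_contractionAverage hψ hψc hhe hθ.1.ne'
  rw [← norm_iteratedFDeriv_iteratedFDeriv,
    iteratedFDeriv_contractionAverage hψ.continuous hh hhc hθ.1.ne',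
    iteratedFDeriv_const_smul_apply' (smooth.of_le (by exact_mod_cast le_top)).contDiffAt,
    norm_smul]
  exact (mul_le_of_le_one_left (norm_nonneg _) h1θ).trans
    (norm_iteratedFDeriv_contractionAverage_le_of_norm_le hψ hψc hhe hθ hB0 e' hB)

end ContractionAverage

section MultiscaleAverage

variable {E F : Type*} [NormedAddCommGroup E] [NormedSpace ℝ E]
  [NormedAddCommGroup F] [NormedSpace ℝ F]

lemma norm_iteratedDeriv_comp_lineMap_le {n : ℕ∞} {g : E → F} (hg : ContDiff ℝ n g) {q : ℕ}
    (hq : q ≤ n) (x p : E) (u : ℝ) :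
    ‖iteratedDeriv q (fun u : ℝ ↦ g (AffineMap.lineMap x p u)) u‖ ≤
      ‖p - x‖ ^ q * ‖iteratedFDeriv ℝ q g (AffineMap.lineMap x p u)‖ := by
  have comp_eq : (fun u : ℝ ↦ g (AffineMap.lineMap x p u)) =
      (fun w ↦ g (w + x)) ∘ ContinuousLinearMap.toSpanSingleton ℝ (p - x) := by
    ext u
    simp [AffineMap.lineMap_apply]
  have shift_smooth : ContDiff ℝ n fun w ↦ g (w + x) := hg.comp (contDiff_id.add contDiff_const)
  rw [← norm_iteratedFDeriv_eq_norm_iteratedDeriv, comp_eq,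
    ContinuousLinearMap.iteratedFDeriv_comp_right _ shift_smooth _ (by exact_mod_cast hq),
    iteratedFDeriv_comp_add_right]
  refine (ContinuousMultilinearMap.norm_compContinuousLinearMap_le _ _).trans_eq ?_
  simp [mul_comm, AffineMap.lineMap_apply]

variable [MeasurableSpace E]

/-- A smooth averaging kernel of total mass one, supported in the closed ball of radius `ρ`. -/
structure IsAveragingKernel (μ : Measure E) (ρ : ℝ) (ψ : E → ℝ) : Prop where
  contDiff : ContDiff ℝ ∞ ψ
  tsupport_subset : tsupport ψ ⊆ closedBall 0 ρ
  integral_eq_one : ∫ p, ψ p ∂μ = 1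

lemma IsAveragingKernel.hasCompactSupport [FiniteDimensional ℝ E] {μ : Measure E} {ρ : ℝ}
    {ψ : E → ℝ} (hψ : IsAveragingKernel μ ρ ψ) : HasCompactSupport ψ :=
  (isCompact_closedBall 0 ρ).of_isClosed_subset (isClosed_tsupport ψ) hψ.tsupport_subset

lemma IsAveragingKernel.lineMap_mem_ball {μ : Measure E} {ρ R : ℝ} {ψ : E → ℝ}
    (hψ : IsAveragingKernel μ ρ ψ) (hR : ρ < R) {x p : E} (hx : x ∈ ball 0 R)
    (hp : p ∈ tsupport ψ) {u : ℝ} (hu : u ∈ Icc 0 1) : AffineMap.lineMap x p u ∈ ball (0 : E) R :=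
  (convex_ball 0 R).lineMap_mem hx (closedBall_subset_ball hR (hψ.tsupport_subset hp)) hu

lemma exists_isAveragingKernel [FiniteDimensional ℝ E] [BorelSpace E] (μ : Measure E)
    [IsLocallyFiniteMeasure μ] [μ.IsOpenPosMeasure] {ρ : ℝ} (hρ : 0 < ρ) :
    ∃ ψ : E → ℝ, IsAveragingKernel μ ρ ψ := by
  let b : ContDiffBump (0 : E) := ⟨ρ / 2, ρ, half_pos hρ, half_lt_self hρ⟩
  exact ⟨b.normed μ, b.contDiff_normed, b.tsupport_normed_eq.subset, b.integral_normed⟩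

/-- The combination, with coefficients `a k` for `k ∈ K`, of the contracted averages of `h` at the
scales `b ^ k * θ`. -/
noncomputable def multiscaleAverage (μ : Measure E) (ψ : E → ℝ) (b : ℝ) (a : ℕ → ℝ) (θ : ℝ)
    (K : Finset ℕ) (h : E → F) (x : E) : F :=
  ∑ k ∈ K, a k • contractionAverage μ ψ (b ^ k * θ) h x

variable [BorelSpace E] [FiniteDimensional ℝ E] {μ : Measure E} [μ.IsAddHaarMeasure] {ρ : ℝ}
  {ψ : E → ℝ} {b θ : ℝ} {a : ℕ → ℝ} {K : Finset ℕ} {h : E → F}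

namespace IsAveragingKernel

lemma contDiff_multiscaleAverage (hψ : IsAveragingKernel μ ρ ψ) (hb : b ≠ 0)
    (hθ : θ ≠ 0) (hh : Continuous h) : ContDiff ℝ ∞ (multiscaleAverage μ ψ b a θ K h) :=
  ContDiff.sum fun k _ ↦ (contDiff_contractionAverage hψ.contDiff hψ.hasCompactSupport hh
    (mul_ne_zero (pow_ne_zero k hb) hθ)).const_smul (a k)

lemma iteratedFDeriv_multiscaleAverage (hψ : IsAveragingKernel μ ρ ψ)
    (hb : b ≠ 0) (hθ : θ ≠ 0) (hh : Continuous h) (e : ℕ) (x : E) :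
    iteratedFDeriv ℝ e (multiscaleAverage μ ψ b a θ K h) x =
      ∑ k ∈ K, a k • iteratedFDeriv ℝ e (contractionAverage μ ψ (b ^ k * θ) h) x := by
  have smooth (k : ℕ) : ContDiff ℝ e (contractionAverage μ ψ (b ^ k * θ) h) :=
    (contDiff_contractionAverage hψ.contDiff hψ.hasCompactSupport hh
      (mul_ne_zero (pow_ne_zero k hb) hθ)).of_le (by exact_mod_cast le_top)
  unfold multiscaleAverage
  rw [iteratedFDeriv_fun_sum_apply fun k _ ↦ ((smooth k).const_smul (a k)).contDiffAt]
  exact Finset.sum_congr rfl fun k _ ↦ iteratedFDeriv_const_smul_apply' (smooth k).contDiffAt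

lemma norm_iteratedFDeriv_multiscaleAverage_le (hψ : IsAveragingKernel μ ρ ψ)
    (ha : IsMomentSequence b a) (hb : 1 < b) (hθ : 0 < θ) (hK : ∀ k ∈ K, b ^ k * θ ≤ 1)
    (hh : ContDiff ℝ ∞ h) (hhc : HasCompactSupport h) {B : ℝ} (hB0 : 0 ≤ B) (e e' : ℕ) {x : E}
    (hB : ∀ p ∈ tsupport ψ, ∀ k ∈ K,
      ‖iteratedFDeriv ℝ e h (AffineMap.lineMap x p (b ^ k * θ))‖ ≤ B) :
    ‖iteratedFDeriv ℝ (e + e') (multiscaleAverage μ ψ b a θ K h) x‖ ≤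
      absMoment b a 0 * (∫ p, ‖iteratedFDeriv ℝ e' ψ p‖ ∂μ) * θ⁻¹ ^ e' * B := by
  set I := ∫ p, ‖iteratedFDeriv ℝ e' ψ p‖ ∂μ
  have term (k : ℕ) (hk : k ∈ K) :
      ‖a k • iteratedFDeriv ℝ (e + e') (contractionAverage μ ψ (b ^ k * θ) h) x‖ ≤
        |a k| * (b ^ k) ^ 0 * (I * θ⁻¹ ^ e' * B) := by
    have hpow : 1 ≤ b ^ k := one_le_pow₀ hb.le
    have hθk : θ ≤ b ^ k * θ := le_mul_of_one_le_left hθ.le hpow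
    rw [norm_smul, pow_zero, mul_one, Real.norm_eq_abs, mul_comm I]
    gcongr
    refine (norm_iteratedFDeriv_contractionAverage_le hψ.contDiff hψ.hasCompactSupport hh hhc
      ⟨by positivity, hK k hk⟩ hB0 e e' (hB · · k hk)).trans ?_
    gcongr
  rw [hψ.iteratedFDeriv_multiscaleAverage (by positivity) hθ.ne' hh.continuous]
  refine (norm_sum_le_of_le K term).trans ?_
  rw [← Finset.sum_mul]
  exact (mul_le_mul_of_nonneg_right (ha.sum_le_absMoment hb K 0) (by positivity)).trans_eq (by ring)

lemma iteratedFDeriv_multiscaleAverage_sub [CompleteSpace F] (hψ : IsAveragingKernel μ ρ ψ)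
    (hb : b ≠ 0) (hθ : θ ≠ 0) (hh : ContDiff ℝ ∞ h) (hhc : HasCompactSupport h) (e : ℕ) (x : E) :
    iteratedFDeriv ℝ e (multiscaleAverage μ ψ b a θ K h - h) x =
      ∫ p, ψ p • (∑ k ∈ K, (a k * (1 - b ^ k * θ) ^ e) •
        iteratedFDeriv ℝ e h (AffineMap.lineMap x p (b ^ k * θ)) -
          iteratedFDeriv ℝ e h (AffineMap.lineMap x p (0 : ℝ))) ∂μ := by
  have he : Continuous (iteratedFDeriv ℝ e h) :=
    hh.continuous_iteratedFDeriv (by exact_mod_cast le_top)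
  have integrable (c θ : ℝ) :
      Integrable (fun p ↦ c • ψ p • iteratedFDeriv ℝ e h (AffineMap.lineMap x p θ)) μ :=
    (integrable_smul_comp_lineMap hψ.contDiff.continuous hψ.hasCompactSupport he x θ).fun_smul c
  have integral_zero :
      ∫ p, ψ p • iteratedFDeriv ℝ e h (AffineMap.lineMap x p (0 : ℝ)) ∂μ =
        iteratedFDeriv ℝ e h x := by
    simp only [AffineMap.lineMap_apply_zero, integral_smul_const, hψ.integral_eq_one, one_smul]
  rw [iteratedFDeriv_sub_apply
    ((hψ.contDiff_multiscaleAverage hb hθ hh.continuous).of_le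
      (by exact_mod_cast le_top)).contDiffAt (hh.of_le (by exact_mod_cast le_top)).contDiffAt,
    hψ.iteratedFDeriv_multiscaleAverage hb hθ hh.continuous]
  simp only [smul_sub, Finset.smul_sum, smul_comm (ψ _)]
  rw [integral_sub (integrable_finsetSum _ fun k _ ↦ integrable _ _)
    (by simpa using integrable 1 0), integral_finsetSum _ fun k _ ↦ integrable _ _, integral_zero]
  congr 1
  refine Finset.sum_congr rfl fun k _ ↦ ?_
  rw [integral_smul, iteratedFDeriv_contractionAverage hψ.contDiff.continuous hh hhc
    (mul_ne_zero (pow_ne_zero k hb) hθ), smul_smul, contractionAverage]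

lemma norm_iteratedFDeriv_multiscaleAverage_sub_le [CompleteSpace F]
    (hψ : IsAveragingKernel μ ρ ψ) (ha : IsMomentSequence b a) (hb : 1 < b) (hθ : 0 < θ)
    (hθ1 : θ ≤ 1) {δ M : ℝ} (hδ : 0 < δ) (hK : ∀ k, k ∈ K ↔ b ^ k * θ ≤ δ) (hh : ContDiff ℝ ∞ h)
    (hhc : HasCompactSupport h) (e l : ℕ) {x : E}
    (hM : ∀ p ∈ tsupport ψ, ∀ u ∈ Icc 0 δ,
      ‖p - x‖ ^ l * ‖iteratedFDeriv ℝ (e + l) h (AffineMap.lineMap x p u)‖ ≤ M)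
    (hMx : ∀ p ∈ tsupport ψ, ∀ q ≤ l,
      ‖p - x‖ ^ q * ‖iteratedFDeriv ℝ (e + q) h x‖ ≤ δ ^ (l - q) * M) :
    ‖iteratedFDeriv ℝ e (multiscaleAverage μ ψ b a θ K h - h) x‖ ≤
      (∫ p, ‖ψ p‖ ∂μ) * ((l + 2) * absMoment b a (e + l) * θ ^ l * M) := by
  have he : ContDiff ℝ ∞ (iteratedFDeriv ℝ e h) :=
    hh.iteratedFDeriv_right (by exact_mod_cast le_top)
  let H (p : E) (u : ℝ) := iteratedFDeriv ℝ e h (AffineMap.lineMap x p u)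
  have hH (p : E) : ContDiff ℝ ∞ (H p) := by
    simp only [H, AffineMap.lineMap_apply_module]
    fun_prop
  have deriv_le (p : E) (q : ℕ) {u : ℝ} (hu : u ∈ Icc 0 δ) :
      ‖iteratedDerivWithin q (H p) (Icc 0 δ) u‖ ≤
        ‖p - x‖ ^ q * ‖iteratedFDeriv ℝ (e + q) h (AffineMap.lineMap x p u)‖ := by
    rw [iteratedDerivWithin_eq_iteratedDeriv (uniqueDiffOn_Icc hδ)
      ((hH p).of_le (by exact_mod_cast le_top)).contDiffAt hu, ← norm_iteratedFDeriv_iteratedFDeriv]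
    exact norm_iteratedDeriv_comp_lineMap_le he le_top x p u
  have extrapolation (p : E) (hp : p ∈ tsupport ψ) :=
    ha.norm_sum_smul_sub_le hb l e hδ hθ hθ1 ((hH p).of_le (by exact_mod_cast le_top)).contDiffOn
      (fun u hu ↦ (deriv_le p l hu).trans (hM p hp u hu))
      (fun q hq ↦ (deriv_le p q ⟨le_rfl, hδ.le⟩).trans
        (by simpa only [AffineMap.lineMap_apply_zero] using hMx p hp q hq)) hK
  rw [hψ.iteratedFDeriv_multiscaleAverage_sub (by positivity) hθ.ne' hh hhc, ← integral_mul_const]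
  refine norm_integral_le_of_norm_le ((hψ.contDiff.continuous.integrable_of_hasCompactSupport
    hψ.hasCompactSupport).norm.mul_const _) (.of_forall fun p ↦ ?_)
  rw [norm_smul]
  by_cases hp : p ∈ tsupport ψ
  · gcongr
    exact extrapolation p hp
  · simp [image_eq_zero_of_notMem_tsupport hp]

end IsAveragingKernel

end MultiscaleAverage

section WeightedDerivBound

variable {E F : Type*} [NormedAddCommGroup E] [NormedSpace ℝ E]
  [NormedAddCommGroup F] [NormedSpace ℝ F] {N K : ℕ} {B C : ℝ} {u v : E → F} {x : E}

/-- The derivatives of `u` at `x` up to order `N` are those allowed for a function bounded by `B`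
in the weighted norm of order `N` and weight `K`: the derivative of order `e` is at most
`B * ‖x‖ ^ (N - e + K)`. -/
def WeightedDerivBound (N K : ℕ) (B : ℝ) (u : E → F) (x : E) : Prop :=
  ∀ e ≤ N, ‖iteratedFDeriv ℝ e u x‖ ≤ B * ‖x‖ ^ (N - e + K)

namespace WeightedDerivBound

lemma mono (hu : WeightedDerivBound N K B u x) (hBC : B ≤ C) : WeightedDerivBound N K C u x :=
  fun e he ↦ (hu e he).trans (by gcongr)

lemma congr (huv : u =ᶠ[𝓝 x] v) (hu : WeightedDerivBound N K B u x) :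
    WeightedDerivBound N K B v x := fun e he ↦ by
  rw [← (huv.iteratedFDeriv ℝ e).eq_of_nhds]
  exact hu e he

lemma of_notMem_tsupport (hx : x ∉ tsupport u) (hB : 0 ≤ B) : WeightedDerivBound N K B u x :=
  fun e _ ↦ by
    rw [Function.notMem_support.1 (mt (support_iteratedFDeriv_subset (𝕜 := ℝ) e ·) hx), norm_zero]
    positivity

lemma mul_norm_pow_iff {j : ℕ} :
    WeightedDerivBound N K (B * ‖x‖ ^ j) u x ↔ WeightedDerivBound N (K + j) B u x := by
  simp only [WeightedDerivBound, mul_assoc, ← pow_add, add_comm j, add_assoc]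

lemma norm_iteratedFDeriv_add_le {n l e q : ℕ} (hu : WeightedDerivBound (n + l) K B u x)
    (he : e ≤ n) (hq : q ≤ l) :
    ‖iteratedFDeriv ℝ (e + q) u x‖ ≤ B * ‖x‖ ^ (n - e + K) * ‖x‖ ^ (l - q) := by
  rw [mul_assoc, ← pow_add, show n - e + K + (l - q) = n + l - (e + q) + K by omega]
  exact hu (e + q) (by omega)

lemma sub (hu : WeightedDerivBound N K B u x) (hv : WeightedDerivBound N K C v x)
    (hu' : ContDiffAt ℝ N u x) (hv' : ContDiffAt ℝ N v x) :
    WeightedDerivBound N K (B + C) (u - v) x := by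
  intro e he
  rw [iteratedFDeriv_sub_apply (hu'.of_le (by exact_mod_cast he))
    (hv'.of_le (by exact_mod_cast he)), add_mul]
  exact (norm_sub_le _ _).trans (add_le_add (hu e he) (hv e he))

lemma smul {χ : E → ℝ} (hu : WeightedDerivBound N K B u x) (hχ : ContDiff ℝ N χ)
    (hu' : ContDiff ℝ N u) (hC : ∀ e ≤ N, ‖x‖ ^ e * ‖iteratedFDeriv ℝ e χ x‖ ≤ C) :
    WeightedDerivBound N K (2 ^ N * C * B) (fun y ↦ χ y • u y) x := by
  have hC0 : 0 ≤ C := le_trans (by positivity) (hC 0 N.zero_le)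
  intro e he
  have hB0 : 0 ≤ B * ‖x‖ ^ (N - e + K) := (norm_nonneg _).trans (hu e he)
  refine (norm_iteratedFDeriv_smul_le hχ hu' x (n := e) (by exact_mod_cast he)).trans ?_
  calc _ ≤ ∑ i ∈ Finset.range (e + 1), (e.choose i : ℝ) * (C * (B * ‖x‖ ^ (N - e + K))) := by
        refine Finset.sum_le_sum fun i hi ↦ ?_
        have hi : i ≤ e := Finset.mem_range_succ_iff.1 hi
        have split : N - (e - i) + K = i + (N - e + K) := by omega
        rw [mul_assoc]
        refine mul_le_mul_of_nonneg_left ?_ (Nat.cast_nonneg _)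
        calc _ ≤ ‖iteratedFDeriv ℝ i χ x‖ * (B * ‖x‖ ^ (N - (e - i) + K)) := by
              gcongr
              exact hu (e - i) (by omega)
          _ = (‖x‖ ^ i * ‖iteratedFDeriv ℝ i χ x‖) * (B * ‖x‖ ^ (N - e + K)) := by
              rw [split, pow_add]; ring
          _ ≤ _ := mul_le_mul_of_nonneg_right (hC i (hi.trans he)) hB0
    _ = 2 ^ e * (C * (B * ‖x‖ ^ (N - e + K))) := by
        rw [← Finset.sum_mul, ← Nat.cast_sum, Nat.sum_range_choose]
        norm_cast
    _ ≤ 2 ^ N * (C * (B * ‖x‖ ^ (N - e + K))) := by gcongr; exact one_le_two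
    _ = _ := by ring

lemma sum {ι : Type*} {I J : Finset ι} {w : ι → E → F} (hw' : ∀ i ∈ I, ContDiff ℝ N (w i))
    (hJ : ∀ i ∈ I, x ∈ tsupport (w i) → i ∈ J)
    (hw : ∀ i ∈ I, x ∈ tsupport (w i) → WeightedDerivBound N K B (w i) x) (hB : 0 ≤ B) :
    WeightedDerivBound N K (J.card * B) (fun y ↦ ∑ i ∈ I, w i y) x := by
  classical
  intro e he
  have term (i : ι) (hi : i ∈ I) :
      ‖iteratedFDeriv ℝ e (w i) x‖ ≤ if i ∈ J then B * ‖x‖ ^ (N - e + K) else 0 := by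
    by_cases hx : x ∈ tsupport (w i)
    · simpa only [hJ i hi hx, if_true] using hw i hi hx e he
    · rw [Function.notMem_support.1 (mt (support_iteratedFDeriv_subset (𝕜 := ℝ) e ·) hx), norm_zero]
      positivity
  rw [iteratedFDeriv_fun_sum_apply fun i hi ↦ ((hw' i hi).of_le (by exact_mod_cast he)).contDiffAt]
  calc _ ≤ ∑ i ∈ I, if i ∈ J then B * ‖x‖ ^ (N - e + K) else 0 := norm_sum_le_of_le I term
    _ = (I ∩ J).card * (B * ‖x‖ ^ (N - e + K)) := by
        rw [Finset.sum_ite_mem, Finset.sum_const, nsmul_eq_mul]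
    _ ≤ J.card * (B * ‖x‖ ^ (N - e + K)) := by
        gcongr
        exact Finset.inter_subset_right
    _ = _ := by ring

end WeightedDerivBound

end WeightedDerivBound

section AnnulusAverage

variable {E F : Type*} [NormedAddCommGroup E] [NormedSpace ℝ E]
  [NormedAddCommGroup F] [NormedSpace ℝ F]

lemma norm_lineMap_le_two_mul {x p : E} {ρ ε u : ℝ} (hε : ε ≤ 1) (hp : ‖p‖ ≤ ρ)
    (hx : ρ * ε ≤ ‖x‖) (hu : u ∈ Icc 0 ε) : ‖(AffineMap.lineMap x p u : E)‖ ≤ 2 * ‖x‖ := by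
  obtain ⟨hu0, huε⟩ := hu
  rw [AffineMap.lineMap_apply_module, two_mul]
  refine (norm_add_le _ _).trans (add_le_add ?_ ?_) <;> rw [norm_smul, Real.norm_of_nonneg]
  · exact mul_le_of_le_one_left (norm_nonneg x) (by linarith)
  · linarith
  · calc u * ‖p‖ ≤ ε * ρ := by gcongr; exact hu0.trans huε
      _ ≤ ‖x‖ := by rwa [mul_comm]
  · exact hu0

/-- The smoothing operator adapted to the annulus of radius comparable to `ε`: the average over the
scales `2 ^ k * (ε ^ 2 / t)` not exceeding `ε`. -/
noncomputable def annulusAverage [MeasurableSpace E] (μ : Measure E) (ψ : E → ℝ) (a : ℕ → ℝ)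
    (ε t : ℝ) (h : E → F) : E → F :=
  multiscaleAverage μ ψ 2 a (ε ^ 2 / t) (Finset.range (Nat.log 2 ⌊t / ε⌋₊ + 1)) h

lemma mem_range_log_floor_iff {ε t : ℝ} (hε : 0 < ε) (hεt : ε ≤ t) (k : ℕ) :
    k ∈ Finset.range (Nat.log 2 ⌊t / ε⌋₊ + 1) ↔ (2 : ℝ) ^ k * (ε ^ 2 / t) ≤ ε := by
  have ht : 0 < t := hε.trans_le hεt
  have hfloor : ⌊t / ε⌋₊ ≠ 0 := (Nat.floor_pos.2 ((one_le_div hε).2 hεt)).ne'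
  rw [Finset.mem_range_succ_iff, Nat.le_log_iff_pow_le one_lt_two hfloor,
    Nat.le_floor_iff (by positivity), le_div_iff₀ hε, mul_div_assoc', div_le_iff₀ ht]
  push_cast
  rw [sq, ← mul_assoc, mul_comm ε t, mul_le_mul_iff_left₀ hε]

lemma inv_pow_mul_pow_le {ρ ε t y : ℝ} (hρ : 0 ≤ ρ) (hε : ε ∈ Ioc 0 1) (ht : 1 ≤ t)
    (hy0 : 0 ≤ y) (hy : y ≤ 4 * ρ * ε) {e l : ℕ} (he : e ≤ l) :
    (ε ^ 2 / t)⁻¹ ^ e * y ^ (l + e) ≤ (1 + 4 * ρ) ^ (2 * l) * t ^ l := by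
  obtain ⟨hε0, hε1⟩ := hε
  have hy' : y ≤ 4 * ρ := hy.trans (mul_le_of_le_one_right (by positivity) hε1)
  have : 0 < t := one_pos.trans_le ht
  calc (ε ^ 2 / t)⁻¹ ^ e * y ^ (l + e)
      = (ε ^ 2 / t)⁻¹ ^ e * ((y ^ 2) ^ e * y ^ (l - e)) := by
        rw [← pow_mul, ← pow_add]; congr 2; omega
    _ ≤ (ε ^ 2 / t)⁻¹ ^ e * (((4 * ρ * ε) ^ 2) ^ e * (4 * ρ) ^ (l - e)) := by gcongr
    _ = ((ε ^ 2 / t)⁻¹ * (4 * ρ * ε) ^ 2) ^ e * (4 * ρ) ^ (l - e) := by rw [mul_pow]; ring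
    _ = (t * (4 * ρ) ^ 2) ^ e * (4 * ρ) ^ (l - e) := by congr 2; field_simp
    _ = (4 * ρ) ^ (2 * e + (l - e)) * t ^ e := by rw [mul_pow, pow_add, pow_mul]; ring
    _ ≤ (1 + 4 * ρ) ^ (2 * e + (l - e)) * t ^ e := by gcongr; linarith
    _ ≤ _ := by
        gcongr
        · linarith
        · omega

variable [MeasurableSpace E] [BorelSpace E] [FiniteDimensional ℝ E]
  {μ : Measure E} [μ.IsAddHaarMeasure] {ρ ε t B : ℝ} {ψ : E → ℝ} {a : ℕ → ℝ} {h : E → F}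
  {n k l : ℕ} {x : E}

namespace IsAveragingKernel

lemma contDiff_annulusAverage (hψ : IsAveragingKernel μ ρ ψ) (hε : ε ≠ 0) (ht : t ≠ 0)
    (hh : Continuous h) : ContDiff ℝ ∞ (annulusAverage μ ψ a ε t h) :=
  hψ.contDiff_multiscaleAverage two_ne_zero (div_ne_zero (pow_ne_zero 2 hε) ht) hh

lemma norm_iteratedFDeriv_annulusAverage_le (hψ : IsAveragingKernel μ ρ ψ)
    (ha : IsMomentSequence 2 a) (hh : ContDiff ℝ ∞ h) (hhc : HasCompactSupport h)
    (hε : ε ∈ Ioc 0 1) (ht : 1 ≤ t) (hB : 0 ≤ B) (hx : ρ * ε ≤ ‖x‖)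
    (hhB : ∀ p ∈ tsupport ψ, ∀ u ∈ Icc 0 ε,
      WeightedDerivBound n k B h (AffineMap.lineMap x p u)) {e : ℕ} (he : e ≤ n) (e' : ℕ) :
    ‖iteratedFDeriv ℝ (e + e') (annulusAverage μ ψ a ε t h) x‖ ≤
      absMoment 2 a 0 * (∫ p, ‖iteratedFDeriv ℝ e' ψ p‖ ∂μ) * (ε ^ 2 / t)⁻¹ ^ e' *
        (B * (2 * ‖x‖) ^ (n - e + k)) := by
  obtain ⟨hε0, hε1⟩ := hε
  have mem_Icc {κ : ℕ} (hκ : κ ∈ Finset.range (Nat.log 2 ⌊t / ε⌋₊ + 1)) :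
      (2 : ℝ) ^ κ * (ε ^ 2 / t) ∈ Icc 0 ε :=
    ⟨by positivity, (mem_range_log_floor_iff hε0 (hε1.trans ht) κ).1 hκ⟩
  refine hψ.norm_iteratedFDeriv_multiscaleAverage_le ha one_lt_two (by positivity)
    (fun κ hκ ↦ (mem_Icc hκ).2.trans hε1) hh hhc (by positivity) e e' fun p hp κ hκ ↦ ?_
  refine (hhB p hp _ (mem_Icc hκ) e he).trans ?_
  gcongr
  exact norm_lineMap_le_two_mul hε1 (by simpa using hψ.tsupport_subset hp) hx (mem_Icc hκ)

/- Only `n` derivatives of `h` are used; the remaining `e'` fall on the kernel, each at the cost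
of a factor `t / ε ^ 2`, which is at most a multiple of `t / ‖x‖ ^ 2` on the annulus. -/
theorem weightedDerivBound_annulusAverage (hψ : IsAveragingKernel μ ρ ψ)
    (ha : IsMomentSequence 2 a) (hρ : 0 ≤ ρ) (hh : ContDiff ℝ ∞ h) (hhc : HasCompactSupport h)
    (hε : ε ∈ Ioc 0 1) (ht : 1 ≤ t) (hB : 0 ≤ B) (hx : ρ * ε ≤ ‖x‖) (hx' : ‖x‖ ≤ 4 * ρ * ε)
    (hhB : ∀ p ∈ tsupport ψ, ∀ u ∈ Icc 0 ε,
      WeightedDerivBound n (k + 2 * l) B h (AffineMap.lineMap x p u)) :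
    WeightedDerivBound (n + l) k
      (absMoment 2 a 0 * (∑ i ∈ Finset.range (l + 1), ∫ p, ‖iteratedFDeriv ℝ i ψ p‖ ∂μ) *
        2 ^ (n + k + 2 * l) * (1 + 4 * ρ) ^ (2 * l) * t ^ l * B)
      (annulusAverage μ ψ a ε t h) x := by
  intro e he
  obtain ⟨e₀, e', he₀, rfl, he'⟩ : ∃ e₀ e', e₀ ≤ n ∧ e = e₀ + e' ∧ e' ≤ l :=
    ⟨min e n, e - min e n, by omega, by omega, by omega⟩
  set P := ∑ i ∈ Finset.range (l + 1), ∫ p, ‖iteratedFDeriv ℝ i ψ p‖ ∂μ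
  have integral_le : ∫ p, ‖iteratedFDeriv ℝ e' ψ p‖ ∂μ ≤ P :=
    Finset.single_le_sum (f := fun i ↦ ∫ p, ‖iteratedFDeriv ℝ i ψ p‖ ∂μ)
      (fun i _ ↦ by positivity) (Finset.mem_range_succ_iff.2 he')
  have : 0 ≤ P := Finset.sum_nonneg fun i _ ↦ integral_nonneg fun _ ↦ norm_nonneg _
  have moment_nonneg := absMoment_nonneg zero_le_two a 0
  have two_pow_le : (2 : ℝ) ^ (n - e₀ + (k + 2 * l)) ≤ 2 ^ (n + k + 2 * l) :=
    pow_le_pow_right₀ one_le_two (by omega)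
  have scale_le := inv_pow_mul_pow_le hρ hε ht (norm_nonneg x) hx' he'
  have exponent : n - e₀ + (k + 2 * l) = l + e' + (n + l - (e₀ + e') + k) := by omega
  calc _ ≤ absMoment 2 a 0 * (∫ p, ‖iteratedFDeriv ℝ e' ψ p‖ ∂μ) * (ε ^ 2 / t)⁻¹ ^ e' *
        (B * (2 * ‖x‖) ^ (n - e₀ + (k + 2 * l))) :=
        hψ.norm_iteratedFDeriv_annulusAverage_le ha hh hhc hε ht hB hx hhB he₀ e'
    _ = absMoment 2 a 0 * (∫ p, ‖iteratedFDeriv ℝ e' ψ p‖ ∂μ) * 2 ^ (n - e₀ + (k + 2 * l)) *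
        ((ε ^ 2 / t)⁻¹ ^ e' * ‖x‖ ^ (l + e')) * B * ‖x‖ ^ (n + l - (e₀ + e') + k) := by
        rw [mul_pow, exponent, pow_add ‖x‖]; ring
    _ ≤ absMoment 2 a 0 * P * 2 ^ (n + k + 2 * l) * ((1 + 4 * ρ) ^ (2 * l) * t ^ l) * B *
        ‖x‖ ^ (n + l - (e₀ + e') + k) := by
        gcongr
    _ = _ := by ring

lemma norm_iteratedFDeriv_annulusAverage_sub_le [CompleteSpace F] (hψ : IsAveragingKernel μ ρ ψ)
    (ha : IsMomentSequence 2 a) (hρ : 0 < ρ) (hh : ContDiff ℝ ∞ h) (hhc : HasCompactSupport h)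
    (hε : ε ∈ Ioc 0 1) (ht : 1 ≤ t) (hB : 0 ≤ B) (hx : ρ * ε ≤ ‖x‖) (hx' : ‖x‖ ≤ 4 * ρ * ε)
    (hhB : ∀ p ∈ tsupport ψ, ∀ u ∈ Icc 0 ε,
      WeightedDerivBound (n + l) k B h (AffineMap.lineMap x p u)) {e : ℕ} (he : e ≤ n) :
    ‖iteratedFDeriv ℝ e (annulusAverage μ ψ a ε t h - h) x‖ ≤
      (∫ p, ‖ψ p‖ ∂μ) * ((l + 2) * absMoment 2 a (e + l) * (ε ^ 2 / t) ^ l *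
        ((5 * ρ) ^ l * (B * (2 * ‖x‖) ^ (n - e + k)))) := by
  obtain ⟨hε0, hε1⟩ := hε
  have ht0 : 0 < t := one_pos.trans_le ht
  have hx4 : ‖x‖ ≤ 4 * ρ := hx'.trans (mul_le_of_le_one_right (by positivity) hε1)
  have hθ1 : ε ^ 2 / t ≤ 1 := div_le_one_of_le₀ ((pow_le_one₀ hε0.le hε1).trans ht) ht0.le
  have norm_le {p : E} (hp : p ∈ tsupport ψ) : ‖p‖ ≤ ρ := by simpa using hψ.tsupport_subset hp
  have norm_sub_le {p : E} (hp : p ∈ tsupport ψ) : ‖p - x‖ ≤ 5 * ρ :=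
    (_root_.norm_sub_le _ _).trans (by linarith [norm_le hp])
  set W := B * (2 * ‖x‖) ^ (n - e + k) with hW
  have segment_bound (p : E) (hp : p ∈ tsupport ψ) (u : ℝ) (hu : u ∈ Icc 0 ε) :
      ‖p - x‖ ^ l * ‖iteratedFDeriv ℝ (e + l) h (AffineMap.lineMap x p u)‖ ≤ (5 * ρ) ^ l * W := by
    refine mul_le_mul (pow_le_pow_left₀ (norm_nonneg _) (norm_sub_le hp) l)
      (((hhB p hp u hu).norm_iteratedFDeriv_add_le he le_rfl).trans ?_) (norm_nonneg _)
      (by positivity)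
    rw [Nat.sub_self, pow_zero, mul_one, hW]
    gcongr
    exact norm_lineMap_le_two_mul hε1 (norm_le hp) hx hu
  have start_bound (p : E) (hp : p ∈ tsupport ψ) (q : ℕ) (hq : q ≤ l) :
      ‖p - x‖ ^ q * ‖iteratedFDeriv ℝ (e + q) h x‖ ≤ ε ^ (l - q) * ((5 * ρ) ^ l * W) := by
    have bound := (hhB p hp 0 ⟨le_rfl, hε0.le⟩).norm_iteratedFDeriv_add_le he hq
    rw [AffineMap.lineMap_apply_zero] at bound
    calc _ ≤ (5 * ρ) ^ q * (W * (5 * ρ * ε) ^ (l - q)) := by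
          refine mul_le_mul (pow_le_pow_left₀ (norm_nonneg _) (norm_sub_le hp) q)
            (bound.trans ?_) (norm_nonneg _) (by positivity)
          rw [hW]; gcongr <;> nlinarith [norm_nonneg x]
      _ = ε ^ (l - q) * ((5 * ρ) ^ (q + (l - q)) * W) := by rw [mul_pow _ ε, pow_add]; ring
      _ = _ := by rw [Nat.add_sub_cancel' hq]
  exact hψ.norm_iteratedFDeriv_multiscaleAverage_sub_le ha one_lt_two (by positivity) hθ1 hε0
    (mem_range_log_floor_iff hε0 (hε1.trans ht)) hh hhc e l segment_bound start_bound

lemma scale_pow_le (hρ : 0 < ρ) (hε : 0 < ε) (ht : 0 < t) {y : ℝ} (hy : ρ * ε ≤ y) (l : ℕ) :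
    (5 * ρ) ^ l * (ε ^ 2 / t) ^ l ≤ (5 / ρ) ^ l * t⁻¹ ^ l * y ^ (2 * l) := by
  calc (5 * ρ) ^ l * (ε ^ 2 / t) ^ l = (5 / ρ) ^ l * t⁻¹ ^ l * (ρ * ε) ^ (2 * l) := by
        rw [pow_mul, ← mul_pow, ← mul_pow, ← mul_pow]; congr 1; field_simp
    _ ≤ _ := by gcongr

/- The factors `‖p - x‖ ≤ 5 * ρ` of the Taylor remainder cost no power of `ε`, and the remaining
factor `(ε ^ 2 / t) ^ l` supplies the weight `‖x‖ ^ (2 * l)` gained. -/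
theorem weightedDerivBound_annulusAverage_sub [CompleteSpace F] (hψ : IsAveragingKernel μ ρ ψ)
    (ha : IsMomentSequence 2 a) (hρ : 0 < ρ) (hh : ContDiff ℝ ∞ h) (hhc : HasCompactSupport h)
    (hε : ε ∈ Ioc 0 1) (ht : 1 ≤ t) (hB : 0 ≤ B) (hx : ρ * ε ≤ ‖x‖) (hx' : ‖x‖ ≤ 4 * ρ * ε)
    (hhB : ∀ p ∈ tsupport ψ, ∀ u ∈ Icc 0 ε,
      WeightedDerivBound (n + l) k B h (AffineMap.lineMap x p u)) :
    WeightedDerivBound n (k + 2 * l)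
      ((∫ p, ‖ψ p‖ ∂μ) * ((l + 2) * ∑ e ∈ Finset.range (n + 1), absMoment 2 a (e + l)) *
        (5 / ρ) ^ l * 2 ^ (n + k) * t⁻¹ ^ l * B) (annulusAverage μ ψ a ε t h - h) x := by
  intro e he
  set A := ∑ e ∈ Finset.range (n + 1), absMoment 2 a (e + l)
  have moment_le : absMoment 2 a (e + l) ≤ A :=
    Finset.single_le_sum (f := fun e ↦ absMoment 2 a (e + l))
      (fun _ _ ↦ absMoment_nonneg zero_le_two a _) (Finset.mem_range_succ_iff.2 he)
  have moment_nonneg := (absMoment_nonneg zero_le_two a _).trans moment_le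
  have two_pow_le : (2 : ℝ) ^ (n - e + k) ≤ 2 ^ (n + k) :=
    pow_le_pow_right₀ one_le_two (by omega)
  have scale_le := scale_pow_le hρ hε.1 (one_pos.trans_le ht) hx l
  calc _ ≤ (∫ p, ‖ψ p‖ ∂μ) * ((l + 2) * absMoment 2 a (e + l) * (ε ^ 2 / t) ^ l *
        ((5 * ρ) ^ l * (B * (2 * ‖x‖) ^ (n - e + k)))) :=
        hψ.norm_iteratedFDeriv_annulusAverage_sub_le ha hρ hh hhc hε ht hB hx hx' hhB he
    _ = (∫ p, ‖ψ p‖ ∂μ) * ((l + 2) * absMoment 2 a (e + l)) *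
        ((5 * ρ) ^ l * (ε ^ 2 / t) ^ l) * 2 ^ (n - e + k) * B * ‖x‖ ^ (n - e + k) := by
        rw [mul_pow 2 ‖x‖]; ring
    _ ≤ (∫ p, ‖ψ p‖ ∂μ) * ((l + 2) * A) * ((5 / ρ) ^ l * t⁻¹ ^ l * ‖x‖ ^ (2 * l)) *
        2 ^ (n + k) * B * ‖x‖ ^ (n - e + k) := by
        gcongr
    _ = _ := by
        rw [show n - e + (k + 2 * l) = 2 * l + (n - e + k) by omega, pow_add ‖x‖]; ring

end IsAveragingKernel

end AnnulusAverage

section Cutoff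

variable {E : Type*} [NormedAddCommGroup E] [NormedSpace ℝ E]

lemma exists_norm_pow_mul_norm_iteratedFDeriv_comp_smul_le {F : Type*} [NormedAddCommGroup F]
    [NormedSpace ℝ F] {g : E → F} (hg : ContDiff ℝ ∞ g) (hgc : HasCompactSupport g) (N : ℕ) :
    ∃ C, ∀ e ≤ N, ∀ (c : ℝ) (x : E),
      ‖x‖ ^ e * ‖iteratedFDeriv ℝ e (fun y ↦ g (c • y)) x‖ ≤ C := by
  have continuous_deriv (e : ℕ) : Continuous (iteratedFDeriv ℝ e g) :=
    hg.continuous_iteratedFDeriv (by exact_mod_cast le_top)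
  have bounded (e : ℕ) : ∃ C, ∀ y, ‖‖y‖ ^ e * ‖iteratedFDeriv ℝ e g y‖‖ ≤ C :=
    ((continuous_norm.pow e).mul (continuous_deriv e).norm).bounded_above_of_compact_support
      (hgc.iteratedFDeriv e).norm.mul_left
  choose C hC using bounded
  refine ⟨∑ e ∈ Finset.range (N + 1), C e, fun e he c x ↦ ?_⟩
  calc ‖x‖ ^ e * ‖iteratedFDeriv ℝ e (fun y ↦ g (c • y)) x‖
      = ‖c • x‖ ^ e * ‖iteratedFDeriv ℝ e g (c • x)‖ := by
        rw [iteratedFDeriv_comp_const_smul c (hg.of_le (by exact_mod_cast le_top)), norm_smul,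
          norm_smul, norm_pow, mul_pow]
        ring
    _ ≤ C e := (le_abs_self _).trans (hC e _)
    _ ≤ _ := Finset.single_le_sum (fun i _ ↦ (norm_nonneg _).trans (hC i 0))
        (Finset.mem_range_succ_iff.2 he)

variable [FiniteDimensional ℝ E] {δ : ℝ} {x : E}

/-- A smooth cutoff equal to `1` on the ball of radius `δ` and to `0` off that of radius `2 * δ`,
obtained by rescaling a fixed bump function. -/
noncomputable def radialCutoff (δ : ℝ) (x : E) : ℝ :=
  (⟨1, 2, one_pos, one_lt_two⟩ : ContDiffBump (0 : E)) (δ⁻¹ • x)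

lemma contDiff_radialCutoff : ContDiff ℝ ∞ (radialCutoff δ : E → ℝ) :=
  (ContDiffBump.contDiff _).comp (contDiff_const_smul _)

lemma radialCutoff_of_norm_le (hδ : 0 < δ) (hx : ‖x‖ ≤ δ) : radialCutoff δ x = 1 :=
  ContDiffBump.one_of_mem_closedBall _ <| by
    rwa [mem_closedBall_zero_iff, norm_smul, Real.norm_of_nonneg (by positivity),
      inv_mul_le_one₀ hδ]

lemma radialCutoff_of_le_norm (hδ : 0 < δ) (hx : 2 * δ ≤ ‖x‖) : radialCutoff δ x = 0 :=
  ContDiffBump.zero_of_le_dist _ <| by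
    rwa [dist_zero_right, norm_smul, Real.norm_of_nonneg (by positivity), inv_mul_eq_div,
      le_div_iff₀ hδ]

lemma tsupport_radialCutoff_subset (hδ : 0 < δ) :
    tsupport (radialCutoff δ : E → ℝ) ⊆ closedBall 0 (2 * δ) :=
  closure_minimal (fun _ hx ↦ mem_closedBall_zero_iff.2 <| le_of_not_ge fun h ↦
    hx (radialCutoff_of_le_norm hδ h)) isClosed_closedBall

variable (E) in
lemma exists_norm_pow_mul_norm_iteratedFDeriv_radialCutoff_le (N : ℕ) :
    ∃ C, ∀ e ≤ N, ∀ δ (x : E), ‖x‖ ^ e * ‖iteratedFDeriv ℝ e (radialCutoff δ) x‖ ≤ C := by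
  obtain ⟨C, hC⟩ := exists_norm_pow_mul_norm_iteratedFDeriv_comp_smul_le
    (ContDiffBump.contDiff (⟨1, 2, one_pos, one_lt_two⟩ : ContDiffBump (0 : E)))
    (ContDiffBump.hasCompactSupport _) N
  exact ⟨C, fun e he δ ↦ hC e he δ⁻¹⟩

/-- A smooth cutoff to the annulus `δ / 2 ≤ ‖x‖ ≤ 2 * δ`; those of radii `r / 2 ^ i` sum to `1` on
the punctured ball of radius `r`. -/
noncomputable def annularCutoff (δ : ℝ) (x : E) : ℝ :=
  radialCutoff δ x - radialCutoff (δ / 2) x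

lemma contDiff_annularCutoff : ContDiff ℝ ∞ (annularCutoff δ : E → ℝ) :=
  contDiff_radialCutoff.sub contDiff_radialCutoff

lemma annularCutoff_of_norm_le (hδ : 0 < δ) (hx : ‖x‖ ≤ δ / 2) : annularCutoff δ x = 0 := by
  rw [annularCutoff, radialCutoff_of_norm_le hδ (by linarith),
    radialCutoff_of_norm_le (by positivity) hx, sub_self]

lemma tsupport_annularCutoff_subset (hδ : 0 < δ) :
    tsupport (annularCutoff δ : E → ℝ) ⊆ {x | δ / 2 ≤ ‖x‖ ∧ ‖x‖ ≤ 2 * δ} := by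
  refine closure_minimal (fun x hx ↦ ⟨?_, ?_⟩)
    ((isClosed_le continuous_const continuous_norm).inter
      (isClosed_le continuous_norm continuous_const)) <;> by_contra! h <;> refine hx ?_
  · exact annularCutoff_of_norm_le hδ h.le
  · rw [annularCutoff, radialCutoff_of_le_norm hδ h.le,
      radialCutoff_of_le_norm (by positivity) (by linarith), sub_self]

lemma sum_range_annularCutoff (r : ℝ) (I : ℕ) (x : E) :
    ∑ i ∈ Finset.range I, annularCutoff (r / 2 ^ i) x =
      radialCutoff r x - radialCutoff (r / 2 ^ I) x := by
  simp only [annularCutoff, div_div, ← pow_succ]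
  rw [Finset.sum_range_sub' (fun i ↦ radialCutoff (r / 2 ^ i) x), pow_zero, div_one]

variable (E) in
lemma exists_norm_pow_mul_norm_iteratedFDeriv_annularCutoff_le (N : ℕ) :
    ∃ C, ∀ e ≤ N, ∀ δ (x : E), ‖x‖ ^ e * ‖iteratedFDeriv ℝ e (annularCutoff δ) x‖ ≤ C := by
  obtain ⟨C, hC⟩ := exists_norm_pow_mul_norm_iteratedFDeriv_radialCutoff_le E N
  refine ⟨C + C, fun e he δ x ↦ ?_⟩
  have smooth (δ : ℝ) : ContDiffAt ℝ e (radialCutoff δ) x :=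
    (contDiff_radialCutoff.of_le (by exact_mod_cast le_top)).contDiffAt
  calc ‖x‖ ^ e * ‖iteratedFDeriv ℝ e (radialCutoff δ - radialCutoff (δ / 2)) x‖
      ≤ ‖x‖ ^ e * (‖iteratedFDeriv ℝ e (radialCutoff δ) x‖ +
          ‖iteratedFDeriv ℝ e (radialCutoff (δ / 2)) x‖) := by
        rw [iteratedFDeriv_sub_apply (smooth _) (smooth _)]
        gcongr
        exact norm_sub_le _ _
    _ ≤ C + C := by rw [mul_add]; exact add_le_add (hC e he _ x) (hC e he _ x)

/- With `n = ⌊log₂ (2 * r / y)⌋`, the condition on `i` forces `n - 2 ≤ i ≤ n`. -/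
lemma exists_card_le_three_dyadic_annuli {r y : ℝ} (hy : 0 < y) :
    ∃ J : Finset ℕ, J.card ≤ 3 ∧
      ∀ i : ℕ, r / 2 ^ i / 2 ≤ y → y ≤ 2 * (r / 2 ^ i) → i ∈ J := by
  set n := Nat.log 2 ⌊2 * r / y⌋₊
  refine ⟨Finset.Icc (n - 2) n, by rw [Nat.card_Icc]; omega, fun i hi hi' ↦ ?_⟩
  have pow_le : (2 : ℝ) ^ i ≤ 2 * r / y := by
    rw [le_div_iff₀ hy]
    rwa [mul_div_assoc', le_div_iff₀ (by positivity), mul_comm] at hi'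
  have le_pow : 2 * r / y ≤ 2 ^ (i + 2) := by
    rw [div_le_iff₀ hy]
    rw [div_div, div_le_iff₀ (by positivity)] at hi
    rw [pow_add]
    linarith
  rw [Finset.mem_Icc]
  constructor
  · have floor_le : ⌊2 * r / y⌋₊ ≤ 2 ^ (i + 2) := Nat.floor_le_of_le (by exact_mod_cast le_pow)
    have log_le := Nat.log_mono_right (b := 2) floor_le
    rw [Nat.log_pow one_lt_two] at log_le
    omega
  · exact Nat.le_log_of_pow_le one_lt_two (Nat.le_floor (by exact_mod_cast pow_le))

variable {F : Type*} [NormedAddCommGroup F] [NormedSpace ℝ F] {B C : ℝ} {n k : ℕ}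

lemma weightedDerivBound_sum_annularCutoff_smul {w : ℕ → E → F} (I : Finset ℕ) {r : ℝ}
    (hr : 0 < r) (hw : ∀ i ∈ I, ContDiff ℝ ∞ (w i))
    (hC : ∀ e ≤ n, ∀ δ (x : E), ‖x‖ ^ e * ‖iteratedFDeriv ℝ e (annularCutoff δ) x‖ ≤ C)
    (hx : x ≠ 0) (hB : 0 ≤ B)
    (hwB : ∀ i ∈ I, r / 2 ^ i / 2 ≤ ‖x‖ → ‖x‖ ≤ 2 * (r / 2 ^ i) →
      WeightedDerivBound n k B (w i) x) :
    WeightedDerivBound n k (3 * (2 ^ n * C * B))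
      (fun y ↦ ∑ i ∈ I, annularCutoff (r / 2 ^ i) y • w i y) x := by
  have hC0 : 0 ≤ C := le_trans (by positivity) (hC 0 n.zero_le 0 0)
  have smooth {f : E → F} (hf : ContDiff ℝ ∞ f) : ContDiff ℝ n f :=
    hf.of_le (by exact_mod_cast le_top)
  have cutoff_smooth (δ : ℝ) : ContDiff ℝ n (annularCutoff δ : E → ℝ) :=
    contDiff_annularCutoff.of_le (by exact_mod_cast le_top)
  obtain ⟨J, hJ, mem_J⟩ := exists_card_le_three_dyadic_annuli (r := r) (norm_pos_iff.2 hx)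
  have norm_mem {i : ℕ} (hxi : x ∈ tsupport fun y ↦ annularCutoff (r / 2 ^ i) y • w i y) :
      r / 2 ^ i / 2 ≤ ‖x‖ ∧ ‖x‖ ≤ 2 * (r / 2 ^ i) :=
    tsupport_annularCutoff_subset (by positivity) (tsupport_smul_subset_left _ _ hxi)
  refine (WeightedDerivBound.sum (J := J) (fun i hi ↦ (cutoff_smooth _).smul (smooth (hw i hi)))
    (fun i _ hxi ↦ mem_J i (norm_mem hxi).1 (norm_mem hxi).2) (fun i hi hxi ↦ ?_)
    (by positivity)).mono (mul_le_mul_of_nonneg_right (by exact_mod_cast hJ) (by positivity))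
  exact (hwB i hi (norm_mem hxi).1 (norm_mem hxi).2).smul (cutoff_smooth _) (smooth (hw i hi))
    fun e he ↦ hC e he _ x

lemma weightedDerivBound_radialCutoff_smul {h : E → F} {j : ℕ} (hδ : 0 < δ) (hh : ContDiff ℝ ∞ h)
    (hC : ∀ e ≤ n, ∀ δ (x : E), ‖x‖ ^ e * ‖iteratedFDeriv ℝ e (radialCutoff δ) x‖ ≤ C)
    (hB : 0 ≤ B) (hhB : WeightedDerivBound n (k + j) B h x) :
    WeightedDerivBound n k (2 ^ n * C * (B * (2 * δ) ^ j)) (fun y ↦ radialCutoff δ y • h y) x := by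
  have hC0 : 0 ≤ C := le_trans (by positivity) (hC 0 n.zero_le 0 0)
  by_cases hx : x ∈ tsupport (radialCutoff δ : E → ℝ)
  · have norm_le : ‖x‖ ≤ 2 * δ := mem_closedBall_zero_iff.1 (tsupport_radialCutoff_subset hδ hx)
    exact ((WeightedDerivBound.mul_norm_pow_iff.2 hhB).mono (by gcongr)).smul
      (contDiff_radialCutoff.of_le (by exact_mod_cast le_top))
      (hh.of_le (by exact_mod_cast le_top)) fun e he ↦ hC e he δ x
  · exact .of_notMem_tsupport (mt (tsupport_smul_subset_left _ _ ·) hx) (by positivity)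

end Cutoff

section DyadicSmoothing

lemma lt_clog_ceil_iff {s : ℝ} {i : ℕ} : i < Nat.clog 2 ⌈s⌉₊ ↔ (2 : ℝ) ^ i < s := by
  rw [Nat.lt_clog_iff_pow_lt one_lt_two, Nat.lt_ceil]
  norm_cast

variable {E F : Type*} [NormedAddCommGroup E] [NormedSpace ℝ E] [FiniteDimensional ℝ E]
  [NormedAddCommGroup F] [NormedSpace ℝ F] [MeasurableSpace E] {μ : Measure E}
  {r R t s B : ℝ} {ψ : E → ℝ} {a : ℕ → ℝ} {h : E → F} {n k l j : ℕ} {x : E}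

/-- The combined smoothing operator: on the dyadic annulus of radius `r / 2 ^ i` it is the
annulus average with `ε = 2⁻ⁱ`, and only the annuli with `2 ^ i < s` are retained. -/
noncomputable def dyadicSmoothing (μ : Measure E) (ψ : E → ℝ) (a : ℕ → ℝ) (r t s : ℝ) (h : E → F)
    (x : E) : F :=
  ∑ i ∈ Finset.range (Nat.clog 2 ⌈s⌉₊),
    annularCutoff (r / 2 ^ i) x • annulusAverage μ ψ a ((1 / 2) ^ i) t h x

lemma half_pow_mem_Ioc (i : ℕ) : (1 / 2 : ℝ) ^ i ∈ Ioc 0 1 :=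
  ⟨by positivity, pow_le_one₀ (by norm_num) (by norm_num)⟩

lemma dyadicSmoothing_sub_eventuallyEq (hr : 0 < r) (hx : x ∈ ball 0 r) :
    (fun y ↦ (∑ i ∈ Finset.range (Nat.clog 2 ⌈s⌉₊), annularCutoff (r / 2 ^ i) y •
        (annulusAverage μ ψ a ((1 / 2) ^ i) t h - h) y)) -
      (fun y ↦ radialCutoff (r / 2 ^ Nat.clog 2 ⌈s⌉₊) y • h y) =ᶠ[𝓝 x]
    dyadicSmoothing μ ψ a r t s h - h := by
  filter_upwards [isOpen_ball.mem_nhds hx] with y hy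
  simp only [Pi.sub_apply, dyadicSmoothing, smul_sub, Finset.sum_sub_distrib, ← Finset.sum_smul,
    sum_range_annularCutoff, radialCutoff_of_norm_le hr (mem_ball_zero_iff.1 hy).le, sub_smul,
    one_smul]
  abel

variable [BorelSpace E] [μ.IsAddHaarMeasure]

namespace IsAveragingKernel

lemma contDiff_dyadicSmoothing (hψ : IsAveragingKernel μ (r / 2) ψ) (ht : t ≠ 0)
    (hh : Continuous h) : ContDiff ℝ ∞ (dyadicSmoothing μ ψ a r t s h) :=
  ContDiff.sum fun _ _ ↦ contDiff_annularCutoff.smul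
    (hψ.contDiff_annulusAverage (by positivity) ht hh)

/- An annulus retained by the operator has `1 ≤ 2 * s / r * ‖x‖`, which turns the additional weight
`j` into the factor `s ^ j`. -/
theorem exists_weightedDerivBound_dyadicSmoothing (hψ : IsAveragingKernel μ (r / 2) ψ)
    (ha : IsMomentSequence 2 a) (hr : 0 < r) (n k l j : ℕ) :
    ∃ C ≥ 0, ∀ h : E → F, ContDiff ℝ ∞ h → HasCompactSupport h → ∀ t s B R : ℝ, 1 ≤ t → 0 < s →
      0 ≤ B → r / 2 < R → (∀ y ∈ ball 0 R, WeightedDerivBound n (k + 2 * l) B h y) →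
      ∀ x ∈ ball 0 R, x ≠ 0 →
        WeightedDerivBound (n + l) (k + j) (C * s ^ j * t ^ l * B)
          (dyadicSmoothing μ ψ a r t s h) x := by
  obtain ⟨Cχ, hCχ⟩ := exists_norm_pow_mul_norm_iteratedFDeriv_annularCutoff_le E (n + l)
  have hCχ0 : 0 ≤ Cχ := le_trans (by positivity) (hCχ 0 (Nat.zero_le _) 0 0)
  set CT := absMoment 2 a 0 * (∑ i ∈ Finset.range (l + 1), ∫ p, ‖iteratedFDeriv ℝ i ψ p‖ ∂μ) *
    2 ^ (n + k + 2 * l) * (1 + 4 * (r / 2)) ^ (2 * l)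
  have hCT0 : 0 ≤ CT := by
    have := absMoment_nonneg zero_le_two a 0
    positivity
  refine ⟨3 * (2 ^ (n + l) * Cχ * (CT * (2 / r) ^ j)), by positivity,
    fun h hh hhc t s B R ht hs hB hR hhB x hx hx0 ↦ ?_⟩
  have ht0 : 0 < t := one_pos.trans_le ht
  refine (weightedDerivBound_sum_annularCutoff_smul (B := CT * (2 / r) ^ j * s ^ j * t ^ l * B)
    _ hr (fun i _ ↦ hψ.contDiff_annulusAverage (half_pow_mem_Ioc i).1.ne' ht0.ne' hh.continuous)
    hCχ hx0 (by positivity) fun i hi hxi hxi' ↦ ?_).mono (le_of_eq (by ring))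
  have one_le : 1 ≤ 2 / r * s * ‖x‖ := by
    have pow_lt := lt_clog_ceil_iff.1 (Finset.mem_range.1 hi)
    calc (1 : ℝ) ≤ 2 / r * 2 ^ i * ‖x‖ := by
          rw [div_div, div_le_iff₀ (by positivity)] at hxi
          rw [div_mul_eq_mul_div, div_mul_eq_mul_div, le_div_iff₀ hr]
          linarith
      _ ≤ 2 / r * s * ‖x‖ := by gcongr
  rw [← WeightedDerivBound.mul_norm_pow_iff]
  refine (hψ.weightedDerivBound_annulusAverage ha (by positivity) hh hhc (half_pow_mem_Ioc i) ht hB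
    (le_of_eq_of_le ?_ hxi) (hxi'.trans_eq ?_) fun p hp u hu ↦
      hhB _ (hψ.lineMap_mem_ball hR hx hp ⟨hu.1, hu.2.trans (half_pow_mem_Ioc i).2⟩)).mono ?_
  · rw [one_div, inv_pow]; ring
  · rw [one_div, inv_pow]; ring
  · calc CT * t ^ l * B ≤ CT * t ^ l * B * (2 / r * s * ‖x‖) ^ j :=
          le_mul_of_one_le_right (by positivity) (one_le_pow₀ one_le)
      _ = _ := by rw [mul_pow, mul_pow]; ring

lemma exists_weightedDerivBound_sum_annulusAverage_sub [CompleteSpace F]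
    (hψ : IsAveragingKernel μ (r / 2) ψ) (ha : IsMomentSequence 2 a) (hr : 0 < r) (n k l : ℕ) :
    ∃ C ≥ 0, ∀ h : E → F, ContDiff ℝ ∞ h → HasCompactSupport h → ∀ (t B R : ℝ) (I : Finset ℕ),
      1 ≤ t → 0 ≤ B → r / 2 < R → (∀ y ∈ ball 0 R, WeightedDerivBound (n + l) k B h y) →
      ∀ x ∈ ball 0 R, x ≠ 0 →
        WeightedDerivBound n (k + 2 * l) (C * (t⁻¹ ^ l * B))
          (fun y ↦ ∑ i ∈ I, annularCutoff (r / 2 ^ i) y •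
            (annulusAverage μ ψ a ((1 / 2) ^ i) t h - h) y) x := by
  obtain ⟨Cχ, hCχ⟩ := exists_norm_pow_mul_norm_iteratedFDeriv_annularCutoff_le E n
  have hCχ0 : 0 ≤ Cχ := le_trans (by positivity) (hCχ 0 (Nat.zero_le _) 0 0)
  have moments_nonneg : 0 ≤ ∑ e ∈ Finset.range (n + 1), absMoment 2 a (e + l) :=
    Finset.sum_nonneg fun _ _ ↦ absMoment_nonneg zero_le_two a _
  set CT := (∫ p, ‖ψ p‖ ∂μ) * ((l + 2) * ∑ e ∈ Finset.range (n + 1), absMoment 2 a (e + l)) *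
    (5 / (r / 2)) ^ l * 2 ^ (n + k)
  refine ⟨3 * (2 ^ n * Cχ * CT), by positivity, fun h hh hhc t B R I ht hB hR hhB x hx hx0 ↦ ?_⟩
  have ht0 : 0 < t := one_pos.trans_le ht
  refine (weightedDerivBound_sum_annularCutoff_smul (B := CT * t⁻¹ ^ l * B) I hr
    (fun i _ ↦ (hψ.contDiff_annulusAverage (half_pow_mem_Ioc i).1.ne' ht0.ne' hh.continuous).sub hh)
    hCχ hx0 (by positivity) fun i _ hxi hxi' ↦ ?_).mono (le_of_eq (by ring))
  exact hψ.weightedDerivBound_annulusAverage_sub ha (half_pos hr) hh hhc (half_pow_mem_Ioc i) ht hB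
    (le_of_eq_of_le (by rw [one_div, inv_pow]; ring) hxi)
    (hxi'.trans_eq (by rw [one_div, inv_pow]; ring)) fun p hp u hu ↦
      hhB _ (hψ.lineMap_mem_ball hR hx hp ⟨hu.1, hu.2.trans (half_pow_mem_Ioc i).2⟩)

/- The cutoffs retained sum to `1 - radialCutoff δ` on the ball, with `δ = r / 2 ^ I` at most
`r / s`; the term left over is supported where `‖x‖ ≤ 2 * r / s`, which gives `s ^ (-j)`. -/
theorem exists_weightedDerivBound_dyadicSmoothing_sub [CompleteSpace F]
    (hψ : IsAveragingKernel μ (r / 2) ψ) (ha : IsMomentSequence 2 a) (hr : 0 < r) (n k l j : ℕ) :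
    ∃ C ≥ 0, ∀ h : E → F, ContDiff ℝ ∞ h → HasCompactSupport h → ∀ t s B B' R : ℝ, 1 ≤ t → 0 < s →
      0 ≤ B → 0 ≤ B' → r / 2 < R → R ≤ r →
      (∀ y ∈ ball 0 R, WeightedDerivBound (n + l) k B h y) →
      (∀ y ∈ ball 0 R, WeightedDerivBound n (k + 2 * l + j) B' h y) →
      ∀ x ∈ ball 0 R, x ≠ 0 →
        WeightedDerivBound n (k + 2 * l) (C * (t⁻¹ ^ l * B + s⁻¹ ^ j * B'))
          (dyadicSmoothing μ ψ a r t s h - h) x := by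
  obtain ⟨C₁, hC₁0, hC₁⟩ :=
    hψ.exists_weightedDerivBound_sum_annulusAverage_sub (F := F) ha hr n k l
  obtain ⟨C₂, hC₂⟩ := exists_norm_pow_mul_norm_iteratedFDeriv_radialCutoff_le E n
  have hC₂0 : 0 ≤ C₂ := le_trans (by positivity) (hC₂ 0 (Nat.zero_le _) 0 0)
  refine ⟨C₁ + 2 ^ n * C₂ * (2 * r) ^ j, by positivity,
    fun h hh hhc t s B B' R ht hs hB hB' hR hRr hhB hhB' x hx hx0 ↦ ?_⟩
  have ht0 : 0 < t := one_pos.trans_le ht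
  set I := Nat.clog 2 ⌈s⌉₊
  have δ_pos : 0 < r / 2 ^ I := by positivity
  have δ_le : r / 2 ^ I ≤ r * s⁻¹ := by
    rw [← div_eq_mul_inv]
    exact div_le_div_of_nonneg_left hr.le hs (not_lt.1 fun h ↦ (lt_clog_ceil_iff.2 h).false)
  have average_bound := hC₁ h hh hhc t B R (Finset.range I) ht hB hR hhB x hx hx0
  have cutoff_bound := weightedDerivBound_radialCutoff_smul δ_pos hh hC₂ hB' (hhB' x hx)
  have average_smooth (i : ℕ) : ContDiff ℝ ∞ (annulusAverage μ ψ a ((1 / 2) ^ i) t h) :=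
    hψ.contDiff_annulusAverage (half_pow_mem_Ioc i).1.ne' ht0.ne' hh.continuous
  refine ((average_bound.sub cutoff_bound ?_ ?_).mono ?_).congr
    (dyadicSmoothing_sub_eventuallyEq hr (ball_subset_ball hRr hx))
  · exact ((ContDiff.sum fun i _ ↦ contDiff_annularCutoff.smul ((average_smooth i).sub hh)).of_le
      (by exact_mod_cast le_top)).contDiffAt
  · exact ((contDiff_radialCutoff.smul hh).of_le (by exact_mod_cast le_top)).contDiffAt
  · calc C₁ * (t⁻¹ ^ l * B) + 2 ^ n * C₂ * (B' * (2 * (r / 2 ^ I)) ^ j)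
        ≤ C₁ * (t⁻¹ ^ l * B) + 2 ^ n * C₂ * (B' * (2 * (r * s⁻¹)) ^ j) := by gcongr
      _ = C₁ * (t⁻¹ ^ l * B) + 2 ^ n * C₂ * (2 * r) ^ j * (s⁻¹ ^ j * B') := by
          rw [← mul_assoc 2 r, mul_pow _ s⁻¹]; ring
      _ ≤ _ := by
          rw [mul_add]
          gcongr <;> simp only [le_add_iff_nonneg_left, le_add_iff_nonneg_right] <;> positivity

end IsAveragingKernel

end DyadicSmoothing

section Extension

variable {E F : Type*} [NormedAddCommGroup E] [NormedSpace ℝ E] [FiniteDimensional ℝ E]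
  [NormedAddCommGroup F] [NormedSpace ℝ F] {f : E → F} {c : E} {r : ℝ}

lemma contDiff_bump_smul (b : ContDiffBump c) (hb : b.rOut < r)
    (hf : ContDiffOn ℝ ∞ f (closedBall c r)) : ContDiff ℝ ∞ (⇑b • f) := by
  refine contDiff_iff_contDiffAt.2 fun x ↦ ?_
  by_cases hx : x ∈ tsupport b
  · rw [b.tsupport_eq] at hx
    exact b.contDiffAt.smul
      (hf.contDiffAt (closedBall_mem_nhds_of_mem (closedBall_subset_ball hb hx)))
  · refine (contDiffAt_const (c := (0 : F))).congr_of_eventuallyEq ?_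
    filter_upwards [notMem_tsupport_iff_eventuallyEq.1 hx] with y hy
    rw [Pi.smul_apply', hy, Pi.zero_apply, zero_smul]

lemma bump_smul_eqOn (b : ContDiffBump c) : EqOn (⇑b • f) f (closedBall c b.rIn) := fun x hx ↦ by
  rw [Pi.smul_apply', b.one_of_mem_closedBall hx, one_smul]

end Extension

section ExtendedSmoothing

variable {E F : Type*} [NormedAddCommGroup E] [NormedSpace ℝ E] [MeasurableSpace E]
  [NormedAddCommGroup F] [NormedSpace ℝ F] {μ : Measure E} {ρ r R t s θ : ℝ} {ψ : E → ℝ}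
  {a : ℕ → ℝ} {f h : E → F} {x : E}

lemma contractionAverage_congr
    (hfh : ∀ p ∈ tsupport ψ, f (AffineMap.lineMap x p θ) = h (AffineMap.lineMap x p θ)) :
    contractionAverage μ ψ θ f x = contractionAverage μ ψ θ h x := by
  refine integral_congr_ae (.of_forall fun p ↦ ?_)
  by_cases hp : p ∈ tsupport ψ
  · simp only [hfh p hp]
  · simp only [image_eq_zero_of_notMem_tsupport hp, zero_smul]

lemma contractionAverage_const_smul (c : ℝ) :
    contractionAverage μ ψ θ (c • h) x = c • contractionAverage μ ψ θ h x := by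
  simp only [contractionAverage, Pi.smul_apply, smul_comm _ c, integral_smul]

lemma contractionAverage_add [BorelSpace E] [IsLocallyFiniteMeasure μ] (hψ : Continuous ψ)
    (hψc : HasCompactSupport ψ) (hf : Continuous f) (hh : Continuous h) :
    contractionAverage μ ψ θ (f + h) x =
      contractionAverage μ ψ θ f x + contractionAverage μ ψ θ h x := by
  simp only [contractionAverage, Pi.add_apply, smul_add]
  exact integral_add (integrable_smul_comp_lineMap hψ hψc hf x θ)
    (integrable_smul_comp_lineMap hψ hψc hh x θ)

lemma IsAveragingKernel.norm_lineMap_le (hψ : IsAveragingKernel μ (r / 2) ψ) {p : E} {u : ℝ}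
    (hx : x ∈ ball 0 r) (hp : p ∈ tsupport ψ) (hθ : 0 ≤ θ) (hu : u ∈ Icc θ 1) :
    ‖(AffineMap.lineMap x p u : E)‖ ≤ (1 - θ / 2) * r := by
  have hxr : ‖x‖ < r := by simpa using hx
  have hpr : ‖p‖ ≤ r / 2 := by simpa using hψ.tsupport_subset hp
  have hr : 0 ≤ r := (norm_nonneg x).trans hxr.le
  obtain ⟨hθu, hu1⟩ := hu
  calc ‖(AffineMap.lineMap x p u : E)‖ ≤ (1 - u) * ‖x‖ + u * ‖p‖ := by
        rw [AffineMap.lineMap_apply_module]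
        refine (norm_add_le _ _).trans_eq ?_
        rw [norm_smul, norm_smul, Real.norm_of_nonneg (sub_nonneg.2 hu1),
          Real.norm_of_nonneg (hθ.trans hθu)]
    _ ≤ (1 - u) * r + u * (r / 2) := by
        have := sub_nonneg.2 hu1
        have := hθ.trans hθu
        gcongr
    _ ≤ _ := by nlinarith

variable [FiniteDimensional ℝ E]

lemma dyadicSmoothing_congr (ht : 1 ≤ t)
    (hfh : ∀ p ∈ tsupport ψ, ∀ u ∈ Icc ((1 / 2) ^ (2 * Nat.clog 2 ⌈s⌉₊) / t) 1,
      f (AffineMap.lineMap x p u) = h (AffineMap.lineMap x p u)) :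
    dyadicSmoothing μ ψ a r t s f x = dyadicSmoothing μ ψ a r t s h x := by
  have ht0 : 0 < t := one_pos.trans_le ht
  refine Finset.sum_congr rfl fun i hi ↦ ?_
  rw [annulusAverage, annulusAverage, multiscaleAverage, multiscaleAverage]
  congr! 3 with κ hκ
  refine contractionAverage_congr fun p hp ↦ hfh p hp _ ⟨?_, ?_⟩
  · calc (1 / 2) ^ (2 * Nat.clog 2 ⌈s⌉₊) / t ≤ (1 / 2) ^ (2 * i) / t :=
          div_le_div_of_nonneg_right (pow_le_pow_of_le_one (by norm_num) (by norm_num)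
            (Nat.mul_le_mul_left 2 (Finset.mem_range.1 hi).le)) ht0.le
      _ = ((1 / 2) ^ i) ^ 2 / t := by rw [← pow_mul, mul_comm]
      _ ≤ _ := le_mul_of_one_le_left (by positivity) (one_le_pow₀ one_le_two)
  · obtain ⟨ε_pos, ε_le⟩ := half_pow_mem_Ioc i
    exact ((mem_range_log_floor_iff ε_pos (ε_le.trans ht) κ).1 hκ).trans ε_le

lemma dyadicSmoothing_eventuallyEq_zero (hr : 0 < r) :
    dyadicSmoothing μ ψ a r t s f =ᶠ[𝓝 0] 0 := by
  filter_upwards [closedBall_mem_nhds (0 : E)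
    (show 0 < r / 2 ^ Nat.clog 2 ⌈s⌉₊ / 2 by positivity)] with x hx
  refine Finset.sum_eq_zero fun i hi ↦ ?_
  have radius_le : r / 2 ^ Nat.clog 2 ⌈s⌉₊ ≤ r / 2 ^ i := by
    gcongr
    exacts [one_le_two, (Finset.mem_range.1 hi).le]
  rw [annularCutoff_of_norm_le (by positivity), zero_smul]
  exact (mem_closedBall_zero_iff.1 hx).trans (by linarith)

namespace IsAveragingKernel

lemma dyadicSmoothing_eqOn (hψ : IsAveragingKernel μ ρ ψ) (ht : 1 ≤ t) (hR : ρ < R)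
    (hfh : EqOn f h (ball 0 R)) :
    EqOn (dyadicSmoothing μ ψ a r t s f) (dyadicSmoothing μ ψ a r t s h) (ball 0 R) :=
  fun _ hx ↦ dyadicSmoothing_congr ht fun _ hp _ hu ↦ hfh <| hψ.lineMap_mem_ball hR hx hp
    ⟨le_trans (by have := one_pos.trans_le ht; positivity) hu.1, hu.2⟩

variable [BorelSpace E]

lemma exists_linearMap_eq_dyadicSmoothing [IsLocallyFiniteMeasure μ]
    (hψ : IsAveragingKernel μ ρ ψ) (a : ℕ → ℝ) (r t s : ℝ) :
    ∃ L : (E → F) →ₗ[ℝ] E → F, ∀ h, Continuous h → L h = dyadicSmoothing μ ψ a r t s h := by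
  let smoothing : C(E, F) →ₗ[ℝ] E → F :=
    { toFun h := dyadicSmoothing μ ψ a r t s h
      map_add' f h := by
        ext x
        simp only [dyadicSmoothing, annulusAverage, multiscaleAverage, ContinuousMap.coe_add,
          contractionAverage_add hψ.contDiff.continuous hψ.hasCompactSupport f.continuous
            h.continuous, Pi.add_apply, smul_add, Finset.sum_add_distrib]
      map_smul' c h := by
        ext x
        simp only [dyadicSmoothing, annulusAverage, multiscaleAverage, ContinuousMap.coe_smul,
          contractionAverage_const_smul, Pi.smul_apply, smul_comm _ c, Finset.smul_sum,
          RingHom.id_apply] }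
  obtain ⟨P, hP⟩ := LinearMap.exists_leftInverse_of_injective
    (ContinuousMap.coeFnLinearMap ℝ (α := E) (M := F))
    (LinearMap.ker_eq_bot.2 DFunLike.coe_injective)
  exact ⟨smoothing ∘ₗ P, fun h hh ↦ congrArg smoothing (LinearMap.congr_fun hP ⟨h, hh⟩)⟩

/- The scales in use are bounded below, so the operator only sees values of `f` in a strictly
smaller ball, and `f` may first be multiplied by a bump function. -/
theorem exists_linearMap_contDiff_eqOn_dyadicSmoothing [μ.IsAddHaarMeasure]
    (hψ : IsAveragingKernel μ (r / 2) ψ) (hr : 0 < r) (ht : 1 ≤ t) (a : ℕ → ℝ) (s : ℝ) :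
    ∃ S : (E → F) →ₗ[ℝ] E → F, ∀ f, ContDiffOn ℝ ∞ f (closedBall 0 r) →
      ContDiff ℝ ∞ (S f) ∧ EqOn (S f) (dyadicSmoothing μ ψ a r t s f) (ball 0 r) := by
  have ht0 : 0 < t := one_pos.trans_le ht
  set θ : ℝ := (1 / 2) ^ (2 * Nat.clog 2 ⌈s⌉₊) / t
  have hθ0 : 0 < θ := by positivity
  have hθ1 : θ ≤ 1 := div_le_one_of_le₀ ((half_pow_mem_Ioc _).2.trans ht) ht0.le
  let b : ContDiffBump (0 : E) :=
    ⟨(1 - θ / 2) * r, (1 - θ / 4) * r, mul_pos (by linarith) hr,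
      mul_lt_mul_of_pos_right (by linarith) hr⟩
  have hb : b.rOut < r := mul_lt_of_lt_one_left hr (by linarith)
  obtain ⟨L, hL⟩ := hψ.exists_linearMap_eq_dyadicSmoothing (F := F) a r t s
  refine ⟨L ∘ₗ DistribSMul.toLinearMap ℝ (E → F) ⇑b, fun f hf ↦ ?_⟩
  have hbf := (contDiff_bump_smul b hb hf).continuous
  rw [LinearMap.comp_apply, DistribSMul.toLinearMap_apply, hL _ hbf]
  refine ⟨hψ.contDiff_dyadicSmoothing ht0.ne' hbf, fun x hx ↦ dyadicSmoothing_congr ht ?_⟩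
  exact fun p hp u hu ↦ bump_smul_eqOn b
    (mem_closedBall_zero_iff.2 (hψ.norm_lineMap_le hx hp hθ0.le hu))

end IsAveragingKernel

end ExtendedSmoothing

section Hardy

variable {E F : Type*} [NormedAddCommGroup E] [NormedSpace ℝ E]
  [NormedAddCommGroup F] [NormedSpace ℝ F] {A : Set E} {f : E → F} {x : E}

lemma norm_iteratedFDerivWithin_le_of_succ (hA : Convex ℝ A) (hA' : UniqueDiffOn ℝ A)
    (h0 : 0 ∈ A) (hx : x ∈ A) {e K : ℕ} {B : ℝ} (hf : ContDiffOn ℝ (e + 1) f A) (hB : 0 ≤ B)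
    (hf0 : iteratedFDerivWithin ℝ e f A 0 = 0)
    (hfB : ∀ y ∈ A, ‖iteratedFDerivWithin ℝ (e + 1) f A y‖ ≤ B * ‖y‖ ^ K) :
    ‖iteratedFDerivWithin ℝ e f A x‖ ≤ B * ‖x‖ ^ (K + 1) := by
  have hdiff : DifferentiableOn ℝ (iteratedFDerivWithin ℝ e f A) A :=
    hf.differentiableOn_iteratedFDerivWithin (by exact_mod_cast e.lt_succ_self) hA'
  have hA₀ := hA.inter (convex_closedBall 0 ‖x‖)
  have mean_value := hA₀.norm_image_sub_le_of_norm_hasFDerivWithin_le (C := B * ‖x‖ ^ K)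
    (fun y hy ↦ (hdiff y hy.1).hasFDerivWithinAt.mono inter_subset_left)
    (fun y hy ↦ by
      rw [norm_fderivWithin_iteratedFDerivWithin]
      refine (hfB y hy.1).trans ?_
      gcongr
      exact mem_closedBall_zero_iff.1 hy.2)
    ⟨h0, mem_closedBall_self (norm_nonneg x)⟩ ⟨hx, by simp⟩
  rwa [hf0, sub_zero, sub_zero, mul_assoc, ← pow_succ] at mean_value

lemma norm_iteratedFDerivWithin_le_of_flat (hA : Convex ℝ A) (hA' : UniqueDiffOn ℝ A)
    (h0 : 0 ∈ A) {N K : ℕ} {B : ℝ} (hf : ContDiffOn ℝ N f A) (hB : 0 ≤ B)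
    (hf0 : ∀ e < N, iteratedFDerivWithin ℝ e f A 0 = 0)
    (hfB : ∀ y ∈ A, ‖iteratedFDerivWithin ℝ N f A y‖ ≤ B * ‖y‖ ^ K) {e : ℕ} (he : e ≤ N) :
    ∀ x ∈ A, ‖iteratedFDerivWithin ℝ e f A x‖ ≤ B * ‖x‖ ^ (N - e + K) := by
  induction he using Nat.decreasingInduction with
  | self => simpa using hfB
  | of_succ e he ih =>
    intro x hx
    rw [show N - e + K = N - (e + 1) + K + 1 by omega]
    exact norm_iteratedFDerivWithin_le_of_succ hA hA' h0 hx (hf.of_le (by exact_mod_cast he)) hB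
      (hf0 e he) ih

lemma uniqueDiffOn_closedBall {c : E} {r : ℝ} (hr : 0 < r) : UniqueDiffOn ℝ (closedBall c r) :=
  uniqueDiffOn_convex (convex_closedBall c r)
    ⟨c, interior_mono ball_subset_closedBall (by simpa [isOpen_ball.interior_eq] using hr)⟩

lemma iteratedFDerivWithin_closedBall_of_mem_ball {c : E} {r : ℝ} (hx : x ∈ ball c r) (n : ℕ) :
    iteratedFDerivWithin ℝ n f (closedBall c r) x = iteratedFDeriv ℝ n f x := by
  rw [← iteratedFDerivWithin_univ]
  exact iteratedFDerivWithin_congr_set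
    (eventuallyEq_univ.2 (closedBall_mem_nhds_of_mem hx)) n

end Hardy

section FlatNorm

variable {m n k : ℕ} {r : ℝ} {f g : EuclideanSpace ℝ (Fin m) → ℝ} {x : EuclideanSpace ℝ (Fin m)}

lemma flatSmoothOnBall_of_eventuallyEq_zero (hr : 0 < r) (hf : ContDiff ℝ ∞ f)
    (hf0 : f =ᶠ[𝓝 0] 0) : FlatSmoothOnBall m r f := by
  refine ⟨hf.contDiffOn, fun i ↦ ?_⟩
  rw [iteratedFDerivWithin_closedBall_of_mem_ball (mem_ball_self hr),
    (hf0.iteratedFDeriv ℝ i).eq_of_nhds, iteratedFDeriv_zero, Pi.zero_apply]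

lemma FlatSmoothOnBall.norm_iteratedFDerivWithin_le_of_forall_le (hr : 0 < r)
    (hf : FlatSmoothOnBall m r f) {N K : ℕ} {B : ℝ} (hB : 0 ≤ B)
    (hfB : ∀ y ∈ closedBall 0 r, ‖iteratedFDerivWithin ℝ N f (closedBall 0 r) y‖ ≤ B * ‖y‖ ^ K)
    {e : ℕ} (he : e ≤ N) (hx : x ∈ closedBall 0 r) :
    ‖iteratedFDerivWithin ℝ e f (closedBall 0 r) x‖ ≤ B * ‖x‖ ^ (N - e + K) :=
  norm_iteratedFDerivWithin_le_of_flat (convex_closedBall 0 r) (uniqueDiffOn_closedBall hr)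
    (mem_closedBall_self hr.le) (hf.1.of_le (by exact_mod_cast le_top)) hB (fun i _ ↦ hf.2 i) hfB
    he x hx

lemma FlatSmoothOnBall.exists_norm_iteratedFDerivWithin_le (hr : 0 < r)
    (hf : FlatSmoothOnBall m r f) (e k : ℕ) :
    ∃ B ≥ 0, ∀ x ∈ closedBall 0 r,
      ‖iteratedFDerivWithin ℝ e f (closedBall 0 r) x‖ ≤ B * ‖x‖ ^ k := by
  obtain ⟨B, hB⟩ := (isCompact_closedBall 0 r).exists_bound_of_continuousOn
    (hf.1.continuousOn_iteratedFDerivWithin (m := e + k) (by exact_mod_cast le_top)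
      (uniqueDiffOn_closedBall hr))
  have hB0 : 0 ≤ B := (norm_nonneg _).trans (hB 0 (mem_closedBall_self hr.le))
  refine ⟨B, hB0, fun x hx ↦ ?_⟩
  have bound := hf.norm_iteratedFDerivWithin_le_of_forall_le hr (K := 0) hB0
    (fun y hy ↦ (hB y hy).trans_eq (by rw [pow_zero, mul_one])) (Nat.le_add_right e k) hx
  rwa [Nat.add_sub_cancel_left, add_zero] at bound

lemma norm_zpow_neg_mul_le_iff {B y : ℝ} (hx : x ≠ 0) :
    ‖x‖ ^ (-(k : ℤ)) * y ≤ B ↔ y ≤ B * ‖x‖ ^ k := by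
  rw [zpow_neg, zpow_natCast, inv_mul_le_iff₀ (pow_pos (norm_pos_iff.2 hx) k), mul_comm]

lemma FlatSmoothOnBall.bddAbove_range (hr : 0 < r) (hf : FlatSmoothOnBall m r f) (n k : ℕ) :
    BddAbove (range fun p : (closedBall (0 : EuclideanSpace ℝ (Fin m)) r \ {0} :
      Set (EuclideanSpace ℝ (Fin m))) × Fin (n + 1) ↦
        ‖(p.1 : EuclideanSpace ℝ (Fin m))‖ ^ (-(k : ℤ)) *
          ‖iteratedFDerivWithin ℝ p.2 f (closedBall 0 r) p.1‖) := by
  choose B hB0 hB using fun e ↦ hf.exists_norm_iteratedFDerivWithin_le hr e k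
  refine ⟨∑ e : Fin (n + 1), B e, ?_⟩
  rintro _ ⟨⟨⟨x, hx, hx0⟩, e⟩, rfl⟩
  exact ((norm_zpow_neg_mul_le_iff hx0).2 (hB e x hx)).trans
    (Finset.single_le_sum (f := fun e : Fin (n + 1) ↦ B e) (fun i _ ↦ hB0 i) (Finset.mem_univ e))

lemma flatNorm_nonneg : 0 ≤ flatNorm m r n k f :=
  Real.iSup_nonneg fun _ ↦ mul_nonneg (zpow_nonneg (norm_nonneg _) _) (norm_nonneg _)

lemma FlatSmoothOnBall.norm_iteratedFDerivWithin_le (hr : 0 < r) (hf : FlatSmoothOnBall m r f)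
    (n k : ℕ) {e : ℕ} (he : e ≤ n) (hx : x ∈ closedBall 0 r) :
    ‖iteratedFDerivWithin ℝ e f (closedBall 0 r) x‖ ≤ flatNorm m r n k f * ‖x‖ ^ k := by
  by_cases hx0 : x = 0
  · rw [hx0, hf.2 e, norm_zero]
    exact mul_nonneg flatNorm_nonneg (by positivity)
  · exact (norm_zpow_neg_mul_le_iff hx0).1
      (le_ciSup (hf.bddAbove_range hr n k) (⟨x, hx, hx0⟩, ⟨e, Nat.lt_succ_of_le he⟩))

lemma FlatSmoothOnBall.weightedDerivBound (hr : 0 < r) (hf : FlatSmoothOnBall m r f) (n k : ℕ)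
    (hx : x ∈ ball 0 r) : WeightedDerivBound n k (flatNorm m r n k f) f x := fun e he ↦ by
  rw [← iteratedFDerivWithin_closedBall_of_mem_ball hx]
  exact hf.norm_iteratedFDerivWithin_le_of_forall_le hr flatNorm_nonneg
    (fun y hy ↦ hf.norm_iteratedFDerivWithin_le hr n k le_rfl hy) he (ball_subset_closedBall hx)

lemma flatNorm_le_of_weightedDerivBound (hr : 0 < r) (hg : ContDiffOn ℝ ∞ g (closedBall 0 r))
    {C : ℝ} (hC : 0 ≤ C) (hgC : ∀ x ∈ ball 0 r, x ≠ 0 → WeightedDerivBound n k C g x) :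
    flatNorm m r n k g ≤ C * (1 + r) ^ n := by
  refine Real.iSup_le (fun ⟨⟨x, hx, hx0⟩, e⟩ ↦ (norm_zpow_neg_mul_le_iff hx0).2 ?_) (by positivity)
  have interior_bound (y) (hy : y ∈ ball 0 r \ {0}) :
      ‖iteratedFDerivWithin ℝ e g (closedBall 0 r) y‖ ≤ C * (1 + r) ^ n * ‖y‖ ^ k := by
    have hyr : ‖y‖ ≤ 1 + r := (mem_ball_zero_iff.1 hy.1).le.trans (by linarith)
    rw [iteratedFDerivWithin_closedBall_of_mem_ball hy.1]
    calc ‖iteratedFDeriv ℝ e g y‖ ≤ C * ‖y‖ ^ (n - e + k) := hgC y hy.1 hy.2 e e.is_le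
      _ = C * ‖y‖ ^ (n - e) * ‖y‖ ^ k := by rw [pow_add, mul_assoc]
      _ ≤ C * (1 + r) ^ (n - e) * ‖y‖ ^ k := by gcongr
      _ ≤ C * (1 + r) ^ n * ‖y‖ ^ k := by gcongr <;> first | linarith | omega
  have mem_closure : x ∈ closure (ball 0 r \ {0}) := by
    rw [sdiff_eq, inter_comm]
    exact isOpen_compl_singleton.inter_closure ⟨hx0, by rwa [closure_ball _ hr.ne']⟩
  refine ContinuousWithinAt.closure_le mem_closure ?_ ?_ interior_bound
  · exact ((hg.continuousOn_iteratedFDerivWithin (by exact_mod_cast le_top)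
      (uniqueDiffOn_closedBall hr)).norm x hx).mono (sdiff_subset.trans ball_subset_closedBall)
  · fun_prop

lemma FlatSmoothOnBall.exists_extension (hr : 0 < r) (hf : FlatSmoothOnBall m r f)
    (hx : x ∈ ball 0 r) :
    ∃ R h, r / 2 < R ∧ R < r ∧ x ∈ ball 0 R ∧ ContDiff ℝ ∞ h ∧ HasCompactSupport h ∧
      EqOn f h (ball 0 R) ∧
      ∀ n k, ∀ y ∈ ball 0 R, WeightedDerivBound n k (flatNorm m r n k f) h y := by
  obtain ⟨R, hR, hRr⟩ := exists_between (max_lt (mem_ball_zero_iff.1 hx) (half_lt_self hr))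
  obtain ⟨hxR, hrR⟩ := max_lt_iff.1 hR
  obtain ⟨R', hRR', hR'r⟩ := exists_between hRr
  let b : ContDiffBump (0 : EuclideanSpace ℝ (Fin m)) := ⟨R, R', (half_pos hr).trans hrR, hRR'⟩
  have eqOn : EqOn f (⇑b • f) (ball 0 R) := ((bump_smul_eqOn b).mono ball_subset_closedBall).symm
  refine ⟨R, ⇑b • f, hrR, hRr, mem_ball_zero_iff.2 hxR, contDiff_bump_smul b hR'r hf.1,
    b.hasCompactSupport.smul_right, eqOn, fun n k y hy ↦ ?_⟩
  exact (hf.weightedDerivBound hr n k (ball_subset_ball hRr.le hy)).congr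
    (eqOn.eventuallyEq_of_mem (isOpen_ball.mem_nhds hy))

end FlatNorm

section FlatSmoothing

variable {m : ℕ} {r : ℝ} {μ : Measure (EuclideanSpace ℝ (Fin m))} [μ.IsAddHaarMeasure]
  {ψ : EuclideanSpace ℝ (Fin m) → ℝ} {a : ℕ → ℝ}

namespace IsAveragingKernel

lemma exists_flatNorm_dyadicSmoothing_le (hψ : IsAveragingKernel μ (r / 2) ψ)
    (ha : IsMomentSequence 2 a) (hr : 0 < r) (n k l j : ℕ) :
    ∃ C ≥ 0, ∀ f g, FlatSmoothOnBall m r f → ContDiff ℝ ∞ g → ∀ t s : ℝ, 1 ≤ t → 0 < s →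
      EqOn g (dyadicSmoothing μ ψ a r t s f) (ball 0 r) →
      flatNorm m r (n + l) (k + j) g ≤ C * s ^ j * t ^ l * flatNorm m r n (k + 2 * l) f := by
  obtain ⟨C, hC0, hC⟩ := hψ.exists_weightedDerivBound_dyadicSmoothing (F := ℝ) ha hr n k l j
  refine ⟨C * (1 + r) ^ (n + l), by positivity, fun f g hf hg t s ht hs hgf ↦ ?_⟩
  have : 0 < t := one_pos.trans_le ht
  have norm_nonneg : 0 ≤ flatNorm m r n (k + 2 * l) f := flatNorm_nonneg
  refine (flatNorm_le_of_weightedDerivBound (C := C * s ^ j * t ^ l * flatNorm m r n (k + 2 * l) f)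
    hr hg.contDiffOn (by positivity) fun x hx hx0 ↦ ?_).trans_eq (by ring)
  obtain ⟨R, h, hR, hRr, hxR, hh, hhc, hfh, bound⟩ := hf.exists_extension hr hx
  have local_eq : EqOn (dyadicSmoothing μ ψ a r t s h) g (ball 0 R) :=
    ((hgf.mono (ball_subset_ball hRr.le)).trans (hψ.dyadicSmoothing_eqOn ht hR hfh)).symm
  exact (hC h hh hhc t s _ R ht hs norm_nonneg hR (bound n (k + 2 * l)) x hxR hx0).congr
    (local_eq.eventuallyEq_of_mem (isOpen_ball.mem_nhds hxR))

lemma exists_flatNorm_dyadicSmoothing_sub_le (hψ : IsAveragingKernel μ (r / 2) ψ)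
    (ha : IsMomentSequence 2 a) (hr : 0 < r) (n k l j : ℕ) :
    ∃ C ≥ 0, ∀ f g, FlatSmoothOnBall m r f → ContDiff ℝ ∞ g → ∀ t s : ℝ, 1 ≤ t → 0 < s →
      EqOn g (dyadicSmoothing μ ψ a r t s f) (ball 0 r) →
      flatNorm m r n (k + 2 * l) (g - f) ≤
        C * (t⁻¹ ^ l * flatNorm m r (n + l) k f + s⁻¹ ^ j * flatNorm m r n (k + 2 * l + j) f) := by
  obtain ⟨C, hC0, hC⟩ := hψ.exists_weightedDerivBound_dyadicSmoothing_sub (F := ℝ) ha hr n k l j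
  refine ⟨C * (1 + r) ^ n, by positivity, fun f g hf hg t s ht hs hgf ↦ ?_⟩
  have : 0 < t := one_pos.trans_le ht
  set B := flatNorm m r (n + l) k f
  set B' := flatNorm m r n (k + 2 * l + j) f
  have hB : 0 ≤ B := flatNorm_nonneg
  have hB' : 0 ≤ B' := flatNorm_nonneg
  refine (flatNorm_le_of_weightedDerivBound (C := C * (t⁻¹ ^ l * B + s⁻¹ ^ j * B')) hr
    (hg.contDiffOn.sub hf.1) (by positivity) fun x hx hx0 ↦ ?_).trans_eq (by ring)
  obtain ⟨R, h, hR, hRr, hxR, hh, hhc, hfh, bound⟩ := hf.exists_extension hr hx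
  have local_eq : EqOn (dyadicSmoothing μ ψ a r t s h - h) (g - f) (ball 0 R) :=
    fun y hy ↦ congrArg₂ (· - ·) ((hψ.dyadicSmoothing_eqOn ht hR hfh hy).symm.trans
      (hgf (ball_subset_ball hRr.le hy)).symm) (hfh hy).symm
  exact (hC h hh hhc t s B B' R ht hs hB hB' hR hRr.le (bound (n + l) k) (bound n (k + 2 * l + j))
    x hxR hx0).congr (local_eq.eventuallyEq_of_mem (isOpen_ball.mem_nhds hxR))

end IsAveragingKernel

end FlatSmoothing

/-- for each `m ≥ 1` and `r > 0` there is a two-parameter family of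
linear smoothing operators `S_{t,s} : C^∞₀(B̄_r) → C^∞₀(B̄_r)` (`t ≥ 1`, `s > 0`) with
`⟨S_{t,s} f⟩_{n+l,k+j,r} ≤ C s^j t^l ⟨f⟩_{n,k+2l,r}` and
`⟨(S_{t,s} − id) f⟩_{n,k+2l,r} ≤ C (t^{-l} ⟨f⟩_{n+l,k,r} + s^{-j} ⟨f⟩_{n,k+2l+j,r})`. -/
theorem combined_smoothing_operators (m : ℕ) (hm : 1 ≤ m) (r : ℝ) (hr : 0 < r) :
    ∃ S : ℝ → ℝ →
        ((EuclideanSpace ℝ (Fin m) → ℝ) →ₗ[ℝ] (EuclideanSpace ℝ (Fin m) → ℝ)),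
      (∀ t s : ℝ, 1 ≤ t → 0 < s →
        ∀ f, FlatSmoothOnBall m r f → FlatSmoothOnBall m r (S t s f)) ∧
      ∀ n k l j : ℕ, ∃ C > (0 : ℝ), ∀ f, FlatSmoothOnBall m r f →
        ∀ t s : ℝ, 1 ≤ t → 0 < s →
          flatNorm m r (n + l) (k + j) (S t s f) ≤
            C * s ^ j * t ^ l * flatNorm m r n (k + 2 * l) f ∧
          flatNorm m r n (k + 2 * l) (S t s f - f) ≤
            C * (t ^ (-(l : ℤ)) * flatNorm m r (n + l) k f +
              s ^ (-(j : ℤ)) * flatNorm m r n (k + 2 * l + j) f) := by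
  obtain ⟨a, ha⟩ := exists_isMomentSequence one_lt_two
  obtain ⟨ψ, hψ⟩ := exists_isAveragingKernel
    (volume : Measure (EuclideanSpace ℝ (Fin m))) (half_pos hr)
  choose S S_smooth S_eq using fun t s ↦
    hψ.exists_linearMap_contDiff_eqOn_dyadicSmoothing (F := ℝ) hr (le_max_left 1 t) a s
  refine ⟨S, fun t s _ _ f hf ↦ ?_, fun n k l j ↦ ?_⟩
  · exact flatSmoothOnBall_of_eventuallyEq_zero hr (S_smooth t s f hf.1)
      (((S_eq t s f hf.1).eventuallyEq_of_mem (ball_mem_nhds 0 hr)).trans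
        (dyadicSmoothing_eventuallyEq_zero hr))
  · obtain ⟨C₁, hC₁0, hC₁⟩ := hψ.exists_flatNorm_dyadicSmoothing_le ha hr n k l j
    obtain ⟨C₂, hC₂0, hC₂⟩ := hψ.exists_flatNorm_dyadicSmoothing_sub_le ha hr n k l j
    refine ⟨C₁ + C₂ + 1, by positivity, fun f hf t s ht hs ↦ ?_⟩
    have S_eq_f := S_eq t s f hf.1
    rw [max_eq_right ht] at S_eq_f
    simp only [zpow_neg, zpow_natCast, ← inv_pow]
    have : 0 < t := one_pos.trans_le ht
    have : 0 ≤ flatNorm m r n (k + 2 * l) f := flatNorm_nonneg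
    have : 0 ≤ flatNorm m r (n + l) k f := flatNorm_nonneg
    have : 0 ≤ flatNorm m r n (k + 2 * l + j) f := flatNorm_nonneg
    constructor
    · exact (hC₁ f _ hf (S_smooth t s f hf.1) t s ht hs S_eq_f).trans (by gcongr; linarith)
    · exact (hC₂ f _ hf (S_smooth t s f hf.1) t s ht hs S_eq_f).trans (by gcongr; linarith)
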